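/- Let n ≥ 1 and let Q and Q′ be real normal defining functions of dimension n, defining hypersurfaces M and M′ with complexifications ℳ and ℳ′. Assume M′ is finitely nondegenerate at 0, and let ℋ = (f,g,f̃,g̃) be an HSPM sending (ℳ,0) into (ℳ′,0) which is totally Segre nondegenerate at 0. Let φ(z) := det(∂f/∂z(z,0)) and ψ(χ) := det(∂f̃/∂χ(χ,0)) (both not identically zero near 0), let j₀ and k₀ be their orders of vanishing at 0, and let p be the degree-j₀ homogeneous term of the Taylor series of φ at 0 and q the degree-k₀ homogeneous term of the Taylor series of ψ at 0. Then j₀ = k₀ and there is a nonzero constant c ∈ ℂ with p(z) = c · conj(q(conj z)) for all z ∈ ℂ^n. -/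

import Mathlib

open Filter Topology Complex

namespace HSPMpaper

variable {n : ℕ}

/-- Partial derivative of `F` in the `i`-th coordinate direction. -/
noncomputable def pd (i : Fin n) (F : (Fin n → ℂ) → ℂ) : (Fin n → ℂ) → ℂ :=
  fun z => fderiv ℂ F z (Pi.single i 1)

/-- Iterated partial derivative `∂^α` for a multi-index `α`. -/
noncomputable def mpd (α : Fin n → ℕ) (F : (Fin n → ℂ) → ℂ) : (Fin n → ℂ) → ℂ :=
  ((List.ofFn fun i : Fin n => (pd i)^[α i]).foldr (· ∘ ·) id) F

/-- Componentwise complex conjugation on `ℂⁿ`. -/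
def conjV (z : Fin n → ℂ) : Fin n → ℂ := fun i => starRingEnd ℂ (z i)

/-- The conjugate defining function `Q̄(χ,z,τ) = conj (Q (conj χ) (conj z) (conj τ))`. -/
def QBar (Q : (Fin n → ℂ) → (Fin n → ℂ) → ℂ → ℂ) : (Fin n → ℂ) → (Fin n → ℂ) → ℂ → ℂ :=
  fun χ z τ => starRingEnd ℂ (Q (conjV χ) (conjV z) (starRingEnd ℂ τ))

/-- `Q` is a normal defining function (of dimension `n`): holomorphic near the origin of
`ℂⁿ × ℂⁿ × ℂ` and satisfying `Q(0,χ,τ) = τ` and `Q(z,0,τ) = τ` near `0`. -/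
def IsNormalDF (Q : (Fin n → ℂ) → (Fin n → ℂ) → ℂ → ℂ) : Prop :=
  (∀ᶠ p in 𝓝 (0 : (Fin n → ℂ) × (Fin n → ℂ) × ℂ),
      AnalyticAt ℂ (fun q : (Fin n → ℂ) × (Fin n → ℂ) × ℂ => Q q.1 q.2.1 q.2.2) p) ∧
  (∀ᶠ p in 𝓝 (0 : (Fin n → ℂ) × (Fin n → ℂ) × ℂ),
      Q 0 p.2.1 p.2.2 = p.2.2 ∧ Q p.1 0 p.2.2 = p.2.2)

/-- `Q` is a real normal defining function: normal and `Q(z,χ,Q̄(χ,z,w)) = w` near `0`. -/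
def IsRealNormalDF (Q : (Fin n → ℂ) → (Fin n → ℂ) → ℂ → ℂ) : Prop :=
  IsNormalDF Q ∧
  ∀ᶠ p in 𝓝 (0 : (Fin n → ℂ) × (Fin n → ℂ) × ℂ),
    Q p.1 p.2.1 (QBar Q p.2.1 p.1 p.2.2) = p.2.2

/-- `(f,g,f̃,g̃)` is a holomorphic Segre preserving map sending `(ℳ,0)` into `(ℳ',0)`. -/
def IsHSPM (Q Q' : (Fin n → ℂ) → (Fin n → ℂ) → ℂ → ℂ)
    (f : (Fin n → ℂ) → ℂ → Fin n → ℂ) (g : (Fin n → ℂ) → ℂ → ℂ)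
    (ft : (Fin n → ℂ) → ℂ → Fin n → ℂ) (gt : (Fin n → ℂ) → ℂ → ℂ) : Prop :=
  (∀ᶠ p in 𝓝 (0 : (Fin n → ℂ) × ℂ), AnalyticAt ℂ (fun q : (Fin n → ℂ) × ℂ => f q.1 q.2) p) ∧
  (∀ᶠ p in 𝓝 (0 : (Fin n → ℂ) × ℂ), AnalyticAt ℂ (fun q : (Fin n → ℂ) × ℂ => g q.1 q.2) p) ∧
  (∀ᶠ p in 𝓝 (0 : (Fin n → ℂ) × ℂ), AnalyticAt ℂ (fun q : (Fin n → ℂ) × ℂ => ft q.1 q.2) p) ∧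
  (∀ᶠ p in 𝓝 (0 : (Fin n → ℂ) × ℂ), AnalyticAt ℂ (fun q : (Fin n → ℂ) × ℂ => gt q.1 q.2) p) ∧
  f 0 0 = 0 ∧ g 0 0 = 0 ∧ ft 0 0 = 0 ∧ gt 0 0 = 0 ∧
  ∀ᶠ p in 𝓝 (0 : (Fin n → ℂ) × (Fin n → ℂ) × ℂ),
    g p.1 (Q p.1 p.2.1 p.2.2) =
      Q' (f p.1 (Q p.1 p.2.1 p.2.2)) (ft p.2.1 p.2.2) (gt p.2.1 p.2.2)

/-- `M` is of finite type at `0`: `(z,χ) ↦ Q(z,χ,0)` does not vanish identically near `0`. -/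
def FiniteType (Q : (Fin n → ℂ) → (Fin n → ℂ) → ℂ → ℂ) : Prop :=
  ¬ ∀ᶠ p in 𝓝 (0 : (Fin n → ℂ) × (Fin n → ℂ)), Q p.1 p.2 0 = 0

/-- Jacobian matrix of `z ↦ f(z,0)` at `z`. -/
noncomputable def jacz (f : (Fin n → ℂ) → ℂ → Fin n → ℂ) (z : Fin n → ℂ) :
    Matrix (Fin n) (Fin n) ℂ :=
  Matrix.of fun i j => pd j (fun z' => f z' 0 i) z

/-- `ℋ` is Segre transversal to `ℳ'` at `0`: `∂g/∂w(0,0) ≠ 0`. -/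
noncomputable def SegreTransversal (g : (Fin n → ℂ) → ℂ → ℂ) : Prop :=
  deriv (fun w => g 0 w) 0 ≠ 0

/-- `ℋ` is totally Segre nondegenerate at `0`. -/
def TotallySegreNondeg (f ft : (Fin n → ℂ) → ℂ → Fin n → ℂ) : Prop :=
  (¬ ∀ᶠ z in 𝓝 (0 : Fin n → ℂ), (jacz f z).det = 0) ∧
  (¬ ∀ᶠ χ in 𝓝 (0 : Fin n → ℂ), (jacz ft χ).det = 0)

/-- `ℋ` is transversally null: `g ≡ 0` and `g̃ ≡ 0` near `0`. -/
def TransversallyNull (g gt : (Fin n → ℂ) → ℂ → ℂ) : Prop :=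
  (∀ᶠ p in 𝓝 (0 : (Fin n → ℂ) × ℂ), g p.1 p.2 = 0) ∧
  (∀ᶠ p in 𝓝 (0 : (Fin n → ℂ) × ℂ), gt p.1 p.2 = 0)

/-- The `k`-th coordinate direction in `ℂⁿ × ℂ`. -/
noncomputable def dirCT (n : ℕ) (k : Fin (n + 1)) : (Fin n → ℂ) × ℂ :=
  if h : (k : ℕ) < n then (Pi.single ⟨k, h⟩ 1, 0) else (0, 1)

/-- `M` is holomorphically nondegenerate at `0`: for some `K`, the map
`(χ,τ) ↦ (∂_z^α Q(0,χ,τ))_{|α| ≤ K}` has generic rank `n+1`. -/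
def HolNondeg (Q : (Fin n → ℂ) → (Fin n → ℂ) → ℂ → ℂ) : Prop :=
  ∃ K : ℕ, ∃ A : Fin (n + 1) → Fin n → ℕ, (∀ j, (∑ i, A j i) ≤ K) ∧
    ¬ ∀ᶠ p in 𝓝 (0 : (Fin n → ℂ) × ℂ),
      (Matrix.of fun j k : Fin (n + 1) =>
        fderiv ℂ (fun q : (Fin n → ℂ) × ℂ => mpd (A j) (fun z => Q z q.1 q.2) 0) p
          (dirCT n k)).det = 0

/-- `M` is of class `𝒞` at `0`: for some `K`, the map
`χ ↦ (∂_z^α Q(0,χ,0))_{|α| ≤ K}` has generic rank `n`. -/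
def ClassC (Q : (Fin n → ℂ) → (Fin n → ℂ) → ℂ → ℂ) : Prop :=
  ∃ K : ℕ, ∃ A : Fin n → Fin n → ℕ, (∀ j, (∑ i, A j i) ≤ K) ∧
    ¬ ∀ᶠ χ in 𝓝 (0 : Fin n → ℂ),
      (Matrix.of fun j k : Fin n =>
        pd k (fun χ' => mpd (A j) (fun z => Q z χ' 0) 0) χ).det = 0

/-- `M` is finitely nondegenerate at `0`: for some `K`, the vectors
`∂_χ ∂_z^α Q(0,0,0)`, `|α| ≤ K`, span `ℂⁿ`. -/
def FinNondeg (Q : (Fin n → ℂ) → (Fin n → ℂ) → ℂ → ℂ) : Prop :=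
  ∃ K : ℕ, Submodule.span ℂ
    {v : Fin n → ℂ | ∃ α : Fin n → ℕ, (∑ i, α i) ≤ K ∧
      v = fun i => pd i (fun χ => mpd α (fun z => Q z χ 0) 0) 0} = ⊤

/-- Full Jacobian matrix of `(z,w) ↦ (f(z,w), g(z,w))` at `p ∈ ℂⁿ × ℂ`. -/
noncomputable def jacFull (f : (Fin n → ℂ) → ℂ → Fin n → ℂ) (g : (Fin n → ℂ) → ℂ → ℂ)
    (p : (Fin n → ℂ) × ℂ) : Matrix (Fin (n + 1)) (Fin (n + 1)) ℂ :=
  Matrix.of fun i k =>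
    fderiv ℂ (fun q : (Fin n → ℂ) × ℂ => (Fin.snoc (f q.1 q.2) (g q.1 q.2) : Fin (n + 1) → ℂ) i) p (dirCT n k)

/-- The degree-`d` homogeneous term of the Taylor series of `φ` at `0`. -/
noncomputable def homogTerm (d : ℕ) (φ : (Fin n → ℂ) → ℂ) : (Fin n → ℂ) → ℂ :=
  fun z => iteratedFDeriv ℂ d φ 0 (fun _ => z) / (d.factorial : ℂ)

/-- The order of vanishing of `φ` at `0`. -/
noncomputable def vanishOrder (φ : (Fin n → ℂ) → ℂ) : ℕ :=
  sInf {d | homogTerm d φ ≠ 0}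

section Analytic

variable {V W : Type*} [NormedAddCommGroup V] [NormedSpace ℂ V]
  [NormedAddCommGroup W] [NormedSpace ℂ W]

/-- Conjugating a continuous multilinear form in its arguments and in its value. -/
noncomputable def conjMultilinear [StarAddMonoid V] [NormedStarGroup V] [StarModule ℂ V] {k : ℕ}
    (p : ContinuousMultilinearMap ℂ (fun _ : Fin k => V) ℂ) :
    ContinuousMultilinearMap ℂ (fun _ : Fin k => V) ℂ :=
  MultilinearMap.mkContinuous
    { toFun := fun v => star (p fun i => star (v i))
      map_update_add' := by
        intro _ m i x y
        have key : ∀ x : V, (fun j => star (Function.update m i x j)) =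
            Function.update (fun j => star (m j)) i (star x) := by
          intro x; ext j; by_cases h : j = i
          · subst h; simp
          · simp [h]
        simp only [key, star_add, ContinuousMultilinearMap.map_update_add]
      map_update_smul' := by
        intro _ m i c x
        have key : ∀ x : V, (fun j => star (Function.update m i x j)) =
            Function.update (fun j => star (m j)) i (star x) := by
          intro x; ext j; by_cases h : j = i
          · subst h; simp
          · simp [h]
        simp only [key, star_smul, ContinuousMultilinearMap.map_update_smul]
        simp }
    ‖p‖ (by
      intro m
      have := p.le_opNorm fun i => star (m i)
      simpa using this)

theorem conjMultilinear_apply [StarAddMonoid V] [NormedStarGroup V] [StarModule ℂ V] {k : ℕ}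
    (p : ContinuousMultilinearMap ℂ (fun _ : Fin k => V) ℂ) (v : Fin k → V) :
    conjMultilinear p v = star (p fun i => star (v i)) := rfl

theorem norm_conjMultilinear_le [StarAddMonoid V] [NormedStarGroup V] [StarModule ℂ V] {k : ℕ}
    (p : ContinuousMultilinearMap ℂ (fun _ : Fin k => V) ℂ) : ‖conjMultilinear p‖ ≤ ‖p‖ :=
  MultilinearMap.mkContinuous_norm_le _ (norm_nonneg _) _

theorem analyticAt_star_star [StarAddMonoid V] [NormedStarGroup V] [StarModule ℂ V]
    {h : V → ℂ} (hh : AnalyticAt ℂ h 0) : AnalyticAt ℂ (fun v => star (h (star v))) 0 := by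
  obtain ⟨p, r, hp⟩ := hh
  refine ⟨fun k => conjMultilinear (p k), r, ?_, hp.r_pos, ?_⟩
  · refine hp.r_le.trans (ENNReal.le_of_forall_nnreal_lt fun s hs => ?_)
    obtain ⟨C, _, hC⟩ := p.norm_mul_pow_le_of_lt_radius hs
    refine FormalMultilinearSeries.le_radius_of_bound _ C fun k => ?_
    exact (mul_le_mul_of_nonneg_right (norm_conjMultilinear_le (p k)) (by positivity)).trans (hC k)
  · intro y hy
    have hy' : star y ∈ Metric.eball (0 : V) r := by
      simpa [Metric.mem_eball, edist_zero_right, enorm_eq_nnnorm] using hy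
    have := (hp.hasSum hy').star
    simpa [conjMultilinear_apply] using this

/-- Germs of analytic functions form a domain. -/
theorem eventually_eq_zero_of_mul {F G : V → ℂ} (hF : AnalyticAt ℂ F 0) (hG : AnalyticAt ℂ G 0)
    (h : ∀ᶠ p in 𝓝 (0 : V), F p * G p = 0) (hF0 : ¬ ∀ᶠ p in 𝓝 (0 : V), F p = 0) :
    ∀ᶠ p in 𝓝 (0 : V), G p = 0 := by
  obtain ⟨r, hr, hball⟩ := Metric.eventually_nhds_iff_ball.1
    ((hF.eventually_analyticAt.and hG.eventually_analyticAt).and h)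
  have : ∃ p ∈ Metric.ball (0 : V) r, F p ≠ 0 := by
    by_contra! hc
    exact hF0 (Filter.eventually_of_mem (Metric.ball_mem_nhds _ hr) hc)
  obtain ⟨p, hp, hFp⟩ := this
  have h1 : ∀ᶠ q in 𝓝 p, F q ≠ 0 := (hball p hp).1.1.continuousAt.eventually_ne hFp
  have h2 : G =ᶠ[𝓝 p] 0 := by
    filter_upwards [h1, Metric.isOpen_ball.mem_nhds hp] with q hq hq'
    exact (mul_eq_zero.1 (hball q hq').2).resolve_left hq
  have h3 := AnalyticOnNhd.eqOn_zero_of_preconnected_of_eventuallyEq_zero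
    (fun q hq => (hball q hq).1.2) (convex_ball (0 : V) r).isPreconnected hp h2
  exact Filter.eventually_of_mem (Metric.ball_mem_nhds _ hr) fun q hq => h3 hq

theorem analyticAt_det {m : ℕ} {A : V → Matrix (Fin m) (Fin m) ℂ} {x : V}
    (hA : ∀ i j, AnalyticAt ℂ (fun p => A p i j) x) : AnalyticAt ℂ (fun p => (A p).det) x := by
  simp only [Matrix.det_apply']
  refine Finset.analyticAt_fun_sum _ fun σ _ => ?_
  exact analyticAt_const.mul (Finset.analyticAt_fun_prod _ fun i _ => hA _ _)

theorem analyticAt_adjugate {m : ℕ} {A : V → Matrix (Fin m) (Fin m) ℂ} {x : V}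
    (hA : ∀ i j, AnalyticAt ℂ (fun p => A p i j) x) (i j : Fin m) :
    AnalyticAt ℂ (fun p => (A p).adjugate i j) x := by
  simp only [Matrix.adjugate_apply]
  refine analyticAt_det fun k l => ?_
  by_cases h : k = j
  · subst h; simpa using analyticAt_const
  · simpa [Matrix.updateRow_apply, h] using hA k l

theorem analyticAt_fderiv_apply {F : V → W} [CompleteSpace W] {x : V} (hF : AnalyticAt ℂ F x)
    {U : Type*} [NormedAddCommGroup U] [NormedSpace ℂ U] {k : U → V} {v : U → V} {y : U}
    (hk : AnalyticAt ℂ k y) (hv : AnalyticAt ℂ v y) (hky : k y = x) :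
    AnalyticAt ℂ (fun p => fderiv ℂ F (k p) (v p)) y := by
  subst hky
  exact (ContinuousLinearMap.analyticAt_bilinear (ContinuousLinearMap.id ℂ (V →L[ℂ] W)) _).comp₂
    (hF.fderiv.comp hk) hv

end Analytic

section Taylor

theorem homogTerm_eq_iteratedDeriv {φ : (Fin n → ℂ) → ℂ} (hφ : AnalyticAt ℂ φ 0) (d : ℕ)
    (z : Fin n → ℂ) :
    homogTerm d φ z = iteratedDeriv d (fun t : ℂ => φ (t • z)) 0 / (d.factorial : ℂ) := by
  obtain ⟨p, r, hp⟩ := hφ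
  have hp' : HasFPowerSeriesOnBall φ p (ContinuousLinearMap.toSpanSingleton ℂ z 0) r := by
    simpa using hp
  have h1 := hp'.compContinuousLinearMap.factorial_smul (1 : ℂ) d
  have h2 := hp.factorial_smul z d
  have h3 : (φ ∘ ContinuousLinearMap.toSpanSingleton ℂ z) = fun t : ℂ => φ (t • z) := by
    ext t; simp
  rw [h3, ← iteratedDeriv_eq_iteratedFDeriv] at h1
  rw [homogTerm, ← h1, ← h2]
  simp [FormalMultilinearSeries.compContinuousLinearMap]

theorem homogTerm_congr {φ φ' : (Fin n → ℂ) → ℂ} (h : φ =ᶠ[𝓝 0] φ') (d : ℕ) :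
    homogTerm d φ = homogTerm d φ' := by
  ext z
  rw [homogTerm, homogTerm, (h.iteratedFDeriv ℂ d).self_of_nhds]

theorem iteratedDeriv_star_star (u : ℂ → ℂ) (d : ℕ) :
    iteratedDeriv d (star ∘ u ∘ star) = star ∘ iteratedDeriv d u ∘ star := by
  induction d with
  | zero => simp
  | succ d ih =>
    rw [iteratedDeriv_succ, iteratedDeriv_succ, ih]
    exact deriv_conj_conj

theorem homogTerm_star_star {φ : (Fin n → ℂ) → ℂ} (hφ : AnalyticAt ℂ φ 0) (d : ℕ)
    (z : Fin n → ℂ) :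
    homogTerm d (fun v => star (φ (star v))) z = star (homogTerm d φ (star z)) := by
  rw [homogTerm_eq_iteratedDeriv (analyticAt_star_star hφ), homogTerm_eq_iteratedDeriv hφ]
  have : (fun t : ℂ => star (φ (star (t • z)))) =
      star ∘ (fun t : ℂ => φ (t • star z)) ∘ star := by
    ext t; simp [star_smul]
  rw [this, iteratedDeriv_star_star]
  simp

theorem exists_homogTerm_ne_zero {φ : (Fin n → ℂ) → ℂ} (hφ : AnalyticAt ℂ φ 0)
    (h0 : ¬ ∀ᶠ z in 𝓝 0, φ z = 0) : ∃ d, homogTerm d φ ≠ 0 := by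
  by_contra! hc
  apply h0
  obtain ⟨p, r, hp⟩ := hφ
  filter_upwards [Metric.eball_mem_nhds (0 : Fin n → ℂ) hp.r_pos] with z hz
  have h1 := hp.hasSum_iteratedFDeriv hz
  have h2 : ∀ d : ℕ, ((d.factorial : ℂ))⁻¹ • (iteratedFDeriv ℂ d φ 0) (fun _ => z) = 0 := by
    intro d
    have := congrFun (hc d) z
    simpa [homogTerm, div_eq_inv_mul] using this
  simp only [h2, zero_add] at h1
  exact h1.unique hasSum_zero

theorem homogTerm_vanishOrder_ne_zero {φ : (Fin n → ℂ) → ℂ} (hφ : AnalyticAt ℂ φ 0)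
    (h0 : ¬ ∀ᶠ z in 𝓝 0, φ z = 0) : homogTerm (vanishOrder φ) φ ≠ 0 :=
  Nat.sInf_mem (s := {d | homogTerm d φ ≠ 0}) (exists_homogTerm_ne_zero hφ h0)

theorem homogTerm_eq_zero_of_lt {φ : (Fin n → ℂ) → ℂ} {d : ℕ} (hd : d < vanishOrder φ) :
    homogTerm d φ = 0 := by
  by_contra h
  exact Nat.notMem_of_lt_sInf hd h

theorem homogTerm_mul {B ψ : (Fin n → ℂ) → ℂ} (hB : AnalyticAt ℂ B 0) (hψ : AnalyticAt ℂ ψ 0)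
    {d : ℕ} (hd : d ≤ vanishOrder ψ) (z : Fin n → ℂ) :
    homogTerm d (fun v => B v * ψ v) z = B 0 * homogTerm d ψ z := by
  have hline : ∀ {φ : (Fin n → ℂ) → ℂ}, AnalyticAt ℂ φ 0 →
      AnalyticAt ℂ (fun t : ℂ => φ (t • z)) 0 := fun {φ} hφ =>
    AnalyticAt.fun_comp (by simpa using hφ) (by fun_prop)
  rw [homogTerm_eq_iteratedDeriv (hB.fun_mul hψ), homogTerm_eq_iteratedDeriv hψ]
  have h1 : (fun t : ℂ => B (t • z) * ψ (t • z)) =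
    (fun t : ℂ => B (t • z)) * fun t : ℂ => ψ (t • z) := rfl
  rw [h1, iteratedDeriv_mul (hline hB).contDiffAt (hline hψ).contDiffAt,
    Finset.sum_eq_single_of_mem 0 (by simp)]
  · simp [mul_div_assoc]
  · intro i hi hi0
    have hlt : d - i < vanishOrder ψ := by
      have := Finset.mem_range.1 hi
      omega
    have h2 := congrFun (homogTerm_eq_zero_of_lt hlt) z
    rw [homogTerm_eq_iteratedDeriv hψ, Pi.zero_apply, div_eq_zero_iff] at h2
    rw [h2.resolve_right (by exact_mod_cast Nat.factorial_ne_zero _), mul_zero]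

theorem vanishOrder_le_of_mul_eq {B B' φ ψ : (Fin n → ℂ) → ℂ} (hB : AnalyticAt ℂ B 0)
    (hB' : AnalyticAt ℂ B' 0) (hφ : AnalyticAt ℂ φ 0) (hψ : AnalyticAt ℂ ψ 0)
    (h : ∀ᶠ z in 𝓝 0, B z * ψ z = B' z * φ z) (hB0 : B 0 ≠ 0)
    (hψ0 : ¬ ∀ᶠ z in 𝓝 0, ψ z = 0) : vanishOrder φ ≤ vanishOrder ψ := by
  by_contra! hlt
  apply homogTerm_vanishOrder_ne_zero hψ hψ0
  ext z
  have h1 := congrFun (homogTerm_congr h (vanishOrder ψ)) z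
  rw [homogTerm_mul hB hψ le_rfl, homogTerm_mul hB' hφ hlt.le, homogTerm_eq_zero_of_lt hlt] at h1
  simpa [hB0] using h1

theorem vanishOrder_star_star {φ : (Fin n → ℂ) → ℂ} (hφ : AnalyticAt ℂ φ 0) :
    vanishOrder (fun v => star (φ (star v))) = vanishOrder φ := by
  unfold vanishOrder
  congr 1
  ext d
  have : homogTerm d (fun v => star (φ (star v))) = 0 ↔ homogTerm d φ = 0 := by
    constructor
    · intro h
      ext z
      have := congrFun h (star z)
      rw [homogTerm_star_star hφ] at this
      simpa using this
    · intro h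
      ext z
      rw [homogTerm_star_star hφ, h]
      simp
  exact not_congr this

end Taylor

section Nondegeneracy

/-- A function of three groups of variables, viewed on the product space. -/
abbrev unc (Q : (Fin n → ℂ) → (Fin n → ℂ) → ℂ → ℂ) : (Fin n → ℂ) × (Fin n → ℂ) × ℂ → ℂ :=
  fun p => Q p.1 p.2.1 p.2.2

/-- No constant direction in `χ` is annihilated by `∂_χ Q(z,0,0)` for all small `z`. -/
def ChiNondeg (Q : (Fin n → ℂ) → (Fin n → ℂ) → ℂ → ℂ) : Prop :=
  ∀ v : Fin n → ℂ, (∀ᶠ z in 𝓝 (0 : Fin n → ℂ), fderiv ℂ (unc Q) (z, 0, 0) (0, v, 0) = 0) → v = 0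

/-- An operator acting on the first group of variables which preserves analyticity and the
vanishing of derivatives in the second group along the first coordinate plane. -/
def ActsSlicewise (T : ((Fin n → ℂ) → ℂ) → (Fin n → ℂ) → ℂ) : Prop :=
  (∀ F G z, F =ᶠ[𝓝 z] G → T F =ᶠ[𝓝 z] T G) ∧
  ∀ K : (Fin n → ℂ) × (Fin n → ℂ) → ℂ, AnalyticAt ℂ K 0 →
    ∃ L : (Fin n → ℂ) × (Fin n → ℂ) → ℂ, AnalyticAt ℂ L 0 ∧
      (∀ᶠ p in 𝓝 (0 : (Fin n → ℂ) × (Fin n → ℂ)), T (fun z => K (z, p.2)) p.1 = L p) ∧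
      ∀ v : Fin n → ℂ, (∀ᶠ z in 𝓝 (0 : Fin n → ℂ), fderiv ℂ K (z, 0) (0, v) = 0) →
        ∀ᶠ z in 𝓝 (0 : Fin n → ℂ), fderiv ℂ L (z, 0) (0, v) = 0

theorem ActsSlicewise.id : ActsSlicewise (id : ((Fin n → ℂ) → ℂ) → (Fin n → ℂ) → ℂ) :=
  ⟨fun _ _ _ h => h, fun K hK => ⟨K, hK, by simp, fun _ h => h⟩⟩

theorem ActsSlicewise.comp {T S : ((Fin n → ℂ) → ℂ) → (Fin n → ℂ) → ℂ}
    (hT : ActsSlicewise T) (hS : ActsSlicewise S) : ActsSlicewise (T ∘ S) := by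
  refine ⟨fun F G z h => hT.1 _ _ _ (hS.1 _ _ _ h), fun K hK => ?_⟩
  obtain ⟨L, hL, hKL, hv⟩ := hS.2 K hK
  obtain ⟨M, hM, hLM, hv'⟩ := hT.2 L hL
  refine ⟨M, hM, ?_, fun v h => hv' v (hv v h)⟩
  filter_upwards [hKL.eventually_nhds, hLM] with p hp hp'
  rw [← hp']
  refine (hT.1 _ _ _ ?_).self_of_nhds
  have hc : ContinuousAt (fun z : Fin n → ℂ => (z, p.2)) p.1 := by fun_prop
  exact hc.eventually hp

theorem ActsSlicewise.iterate {T : ((Fin n → ℂ) → ℂ) → (Fin n → ℂ) → ℂ}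
    (hT : ActsSlicewise T) (k : ℕ) : ActsSlicewise T^[k] := by
  induction k with
  | zero => exact .id
  | succ k ih => exact ih.comp hT

theorem ActsSlicewise.foldr {l : List (((Fin n → ℂ) → ℂ) → (Fin n → ℂ) → ℂ)}
    (hl : ∀ T ∈ l, ActsSlicewise T) : ActsSlicewise (l.foldr (· ∘ ·) _root_.id) := by
  induction l with
  | nil => exact .id
  | cons T l ih =>
    exact (hl T (by simp)).comp (ih fun S hS => hl S (by simp [hS]))

theorem fderiv_slice_left {K : (Fin n → ℂ) × (Fin n → ℂ) → ℂ} {p : (Fin n → ℂ) × (Fin n → ℂ)}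
    (hK : DifferentiableAt ℂ K p) (v : Fin n → ℂ) :
    fderiv ℂ (fun z => K (z, p.2)) p.1 v = fderiv ℂ K p (v, 0) := by
  have h : HasFDerivAt (fun z => K (z, p.2)) _ p.1 :=
    HasFDerivAt.comp p.1 (f := fun z : Fin n → ℂ => (z, p.2)) hK.hasFDerivAt
    ((hasFDerivAt_id p.1).prodMk (hasFDerivAt_const p.2 p.1))
  simpa using congrArg (fun L => L v) h.fderiv

theorem fderiv_slice_right {K : (Fin n → ℂ) × (Fin n → ℂ) → ℂ} {p : (Fin n → ℂ) × (Fin n → ℂ)}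
    (hK : DifferentiableAt ℂ K p) (v : Fin n → ℂ) :
    fderiv ℂ (fun χ => K (p.1, χ)) p.2 v = fderiv ℂ K p (0, v) := by
  have h : HasFDerivAt (fun χ => K (p.1, χ)) _ p.2 :=
    HasFDerivAt.comp p.2 (f := fun χ : Fin n → ℂ => (p.1, χ)) hK.hasFDerivAt
    ((hasFDerivAt_const p.1 p.2).prodMk (hasFDerivAt_id p.2))
  simpa using congrArg (fun L => L v) h.fderiv

theorem tendsto_prod_zero {X Y : Type*} [TopologicalSpace X] [TopologicalSpace Y] [Zero X]
    [Zero Y] :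
    Tendsto (fun z : X => (z, (0 : Y))) (𝓝 0) (𝓝 0) :=
  (by fun_prop : Continuous fun z : X => (z, (0 : Y))).tendsto' _ _ rfl

theorem fderiv_fderiv_apply {V : Type*} [NormedAddCommGroup V] [NormedSpace ℂ V] {K : V → ℂ}
    {p : V} (hK : AnalyticAt ℂ K p) (u v : V) :
    fderiv ℂ (fun q => fderiv ℂ K q u) p v = fderiv ℂ (fderiv ℂ K) p v u := by
  have h := hK.fderiv.differentiableAt.hasFDerivAt.clm_apply (hasFDerivAt_const u p)
  simpa using congrArg (fun L => L v) h.fderiv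

theorem actsSlicewise_pd (j : Fin n) : ActsSlicewise (pd j) := by
  refine ⟨fun F G z h => ?_, fun K hK => ?_⟩
  · filter_upwards [h.fderiv (𝕜 := ℂ)] with w hw
    simp only [pd, hw]
  · refine ⟨fun p => fderiv ℂ K p (Pi.single j 1, 0),
      analyticAt_fderiv_apply hK analyticAt_id analyticAt_const rfl, ?_, fun v hv => ?_⟩
    · filter_upwards [hK.eventually_analyticAt] with p hp
      exact fderiv_slice_left hp.differentiableAt _
    · filter_upwards [hv.eventually_nhds, tendsto_prod_zero.eventually hK.eventually_analyticAt]
        with z hz hKz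
      have hsymm : fderiv ℂ (fderiv ℂ K) (z, 0) (0, v) (Pi.single j 1, 0) =
          fderiv ℂ (fderiv ℂ K) (z, 0) (Pi.single j 1, 0) (0, v) :=
        (hKz.contDiffAt (n := ⊤)).isSymmSndFDerivAt_of_omega _ _
      rw [fderiv_fderiv_apply hKz, hsymm, ← fderiv_fderiv_apply hKz,
        ← fderiv_slice_left (p := (z, 0))]
      · have : (fun w : Fin n → ℂ => fderiv ℂ K (w, 0) (0, v)) =ᶠ[𝓝 z] fun _ => 0 := hz
        simp [this.fderiv_eq]
      · exact (analyticAt_fderiv_apply hKz analyticAt_id analyticAt_const rfl).differentiableAt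

theorem actsSlicewise_mpd (α : Fin n → ℕ) : ActsSlicewise (mpd α) := by
  apply ActsSlicewise.foldr
  intro T hT
  obtain ⟨i, rfl⟩ := List.mem_ofFn.1 hT
  exact (actsSlicewise_pd i).iterate _

theorem fderiv_apply_eq_sum {V : Type*} [NormedAddCommGroup V] [NormedSpace ℂ V]
    (L : (Fin n → ℂ) →L[ℂ] V) (v : Fin n → ℂ) : L v = ∑ i, v i • L (Pi.single i 1) := by
  conv_lhs => rw [pi_eq_sum_univ' v]
  simp [map_sum]

theorem ChiNondeg.of_finNondeg {Q : (Fin n → ℂ) → (Fin n → ℂ) → ℂ → ℂ}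
    (hQ : AnalyticAt ℂ (unc Q) 0) (h : FinNondeg Q) : ChiNondeg Q := by
  intro v hv
  obtain ⟨k, hk⟩ := h
  set K : (Fin n → ℂ) × (Fin n → ℂ) → ℂ := fun p => Q p.1 p.2 0 with hKdef
  set ι : (Fin n → ℂ) × (Fin n → ℂ) →L[ℂ] (Fin n → ℂ) × (Fin n → ℂ) × ℂ :=
    (ContinuousLinearMap.fst ℂ _ _).prod ((ContinuousLinearMap.snd ℂ _ _).prod 0)
  have hKι : K = unc Q ∘ ι := rfl
  have hK : AnalyticAt ℂ K 0 := by
    rw [hKι]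
    exact AnalyticAt.comp (by simpa using hQ) (ι.analyticAt 0)
  have hv' : ∀ᶠ z in 𝓝 (0 : Fin n → ℂ), fderiv ℂ K (z, 0) (0, v) = 0 := by
    have ht : Tendsto (fun z : Fin n → ℂ => (z, (0 : Fin n → ℂ), (0 : ℂ))) (𝓝 0) (𝓝 0) :=
      (by fun_prop : Continuous fun z : Fin n → ℂ =>
        (z, (0 : Fin n → ℂ), (0 : ℂ))).tendsto' _ _ rfl
    filter_upwards [hv, ht.eventually hQ.eventually_analyticAt] with z hz hQz
    have := (HasFDerivAt.comp ((z, 0) : (Fin n → ℂ) × (Fin n → ℂ))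
      (show HasFDerivAt (unc Q) _ (ι (z, 0)) from hQz.differentiableAt.hasFDerivAt)
      ι.hasFDerivAt).fderiv
    rw [hKι, this]
    exact hz
  let φ : (Fin n → ℂ) →ₗ[ℂ] ℂ := ∑ i, v i • LinearMap.proj i
  have hφ : ∀ w, φ w = ∑ i, v i * w i := fun w => by simp [φ, LinearMap.sum_apply]
  have hφ0 : ∀ w, φ w = 0 := by
    intro w
    have hw : w ∈ (⊤ : Submodule ℂ (Fin n → ℂ)) := trivial
    rw [← hk] at hw
    induction hw using Submodule.span_induction with
    | mem w hw =>
      obtain ⟨α, -, rfl⟩ := hw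
      obtain ⟨L, hL, hKL, hLv⟩ := (actsSlicewise_mpd α).2 K hK
      have hcongr : (fun χ => mpd α (fun z => Q z χ 0) 0) =ᶠ[𝓝 0] fun χ => L (0, χ) := by
        have ht : Tendsto (fun χ : Fin n → ℂ => ((0 : Fin n → ℂ), χ)) (𝓝 0) (𝓝 0) :=
          (by fun_prop : Continuous fun χ : Fin n → ℂ => ((0 : Fin n → ℂ), χ)).tendsto' _ _ rfl
        exact ht.eventually hKL
      have h0 := (hLv v hv').self_of_nhds
      rw [← fderiv_slice_right (p := (0, 0)) hL.differentiableAt, fderiv_apply_eq_sum] at h0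
      rw [hφ]
      simpa [pd, hcongr.fderiv_eq] using h0
    | zero => simp
    | add x y _ _ hx hy => simp [hx, hy]
    | smul c x _ hx => simp [hx]
  ext i
  have := hφ0 (Pi.single i 1)
  rw [hφ] at this
  simpa [Pi.single_apply] using this

end Nondegeneracy

section MaximumModulus

variable {V W : Type*} [NormedAddCommGroup V] [NormedSpace ℂ V]
  [NormedAddCommGroup W] [NormedSpace ℂ W]

/-- If the zeros of `S(·,χ)` can only occur over the zeros of a nontrivial function of `χ`, while
`S(·,0)` is nontrivial, then `S` does not vanish at the origin. -/
theorem ne_zero_of_zeros_fibered {S : V × W → ℂ} (hS : AnalyticAt ℂ S 0)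
    (hS0 : ¬ ∀ᶠ z in 𝓝 (0 : V), S (z, 0) = 0) {h : W → ℂ}
    (hh : ¬ ∀ᶠ χ in 𝓝 (0 : W), h χ = 0)
    (hSh : ∀ᶠ p in 𝓝 (0 : V × W), S p = 0 → h p.2 = 0) : S 0 ≠ 0 := by
  intro hzero
  obtain ⟨r, hr, hball⟩ := Metric.eventually_nhds_iff_ball.1 (hS.eventually_analyticAt.and hSh)
  have hmem : ∀ {z : V} {χ : W}, ‖z‖ < r → ‖χ‖ < r → (z, χ) ∈ Metric.ball (0 : V × W) r := by
    intro z χ hz hχ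
    simp [Prod.norm_def, hz, hχ]
  obtain ⟨v, hv, hSv⟩ : ∃ v ∈ Metric.ball (0 : V) r, S (v, 0) ≠ 0 := by
    by_contra! hc
    exact hS0 (Filter.eventually_of_mem (Metric.ball_mem_nhds _ hr) hc)
  rw [mem_ball_zero_iff] at hv
  have hsv : ∀ {s : ℂ}, ‖s‖ ≤ 1 → ‖s • v‖ < r := by
    intro s hs
    rw [norm_smul]
    exact (mul_le_of_le_one_left (norm_nonneg _) hs).trans_lt hv
  have hline : ∀ {χ : W}, ‖χ‖ < r → ∀ {s : ℂ}, ‖s‖ ≤ 1 →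
      AnalyticAt ℂ (fun s : ℂ => S (s • v, χ)) s := fun {χ} hχ {s} hs =>
    AnalyticAt.fun_comp (hball _ (hmem (hsv hs) hχ)).1 (by fun_prop)
  have h0r : ‖(0 : W)‖ < r := by simpa using hr
  have hne : ∀ᶠ s in 𝓝[≠] (0 : ℂ), S (s • v, 0) ≠ 0 := by
    refine (hline h0r (by simp)).eventually_eq_zero_or_eventually_ne_zero.resolve_left fun hc => ?_
    have := AnalyticOnNhd.eqOn_zero_of_preconnected_of_eventuallyEq_zero
      (f := fun s : ℂ => S (s • v, 0)) (U := Metric.closedBall 0 1)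
      (fun s hs => hline h0r (by simpa using hs)) (convex_closedBall (0 : ℂ) 1).isPreconnected
      (Metric.mem_closedBall_self zero_le_one) hc
    exact hSv (by simpa using this (show (1 : ℂ) ∈ Metric.closedBall (0 : ℂ) 1 by simp))
  obtain ⟨ε, hε, hεne⟩ := Metric.eventually_nhds_iff_ball.1 (eventually_nhdsWithin_iff.1 hne)
  set ρ : ℝ := min (ε / 2) 1 with hρ
  have hρ0 : 0 < ρ := by positivity
  have hρ1 : ρ ≤ 1 := min_le_right _ _
  have hρε : ρ < ε := (min_le_left _ _).trans_lt (by linarith)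
  have hsphere : ∀ s ∈ Metric.sphere (0 : ℂ) ρ, ‖s‖ ≤ 1 ∧ S (s • v, 0) ≠ 0 := by
    intro s hs
    have hs' : ‖s‖ = ρ := by simpa using hs
    refine ⟨hs'.trans_le hρ1, hεne s (by simpa [hs'] using hρε) fun h0 => ?_⟩
    rw [Set.mem_singleton_iff.1 h0] at hs'
    simp at hs'
    linarith
  obtain ⟨m, hm, hmin⟩ : ∃ m > 0, ∀ s ∈ Metric.sphere (0 : ℂ) ρ, m ≤ ‖S (s • v, 0)‖ := by
    obtain ⟨s₀, hs₀, hs₀'⟩ := (isCompact_sphere (0 : ℂ) ρ).exists_isMinOn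
      (NormedSpace.sphere_nonempty.2 hρ0.le) (f := fun s => ‖S (s • v, 0)‖)
      (fun s hs => (hline h0r (hsphere s hs).1).continuousAt.norm.continuousWithinAt)
    exact ⟨_, norm_pos_iff.2 (hsphere s₀ hs₀).2, fun s hs => hs₀' hs⟩
  have htube : ∀ᶠ χ in 𝓝 (0 : W), ∀ s ∈ Metric.sphere (0 : ℂ) ρ, m / 2 < ‖S (s • v, χ)‖ := by
    refine (isCompact_sphere (0 : ℂ) ρ).eventually_forall_of_forall_eventually
      (P := fun χ s => m / 2 < ‖S (s • v, χ)‖) fun s hs => ?_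
    have hc : ContinuousAt (fun q : W × ℂ => ‖S (q.2 • v, q.1)‖) (0, s) := by
      have h1 : ContinuousAt S (s • v, 0) :=
        (hball _ (hmem (hsv (hsphere s hs).1) h0r)).1.continuousAt
      exact (ContinuousAt.comp (g := S) (f := fun q : W × ℂ => (q.2 • v, q.1)) h1
        (by fun_prop)).norm
    exact hc.eventually (lt_mem_nhds (by linarith [hmin s hs]))
  have hsmall : ∀ᶠ χ in 𝓝 (0 : W), ‖S (0, χ)‖ < m / 2 := by
    have hc : ContinuousAt (fun χ : W => ‖S (0, χ)‖) 0 :=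
      (ContinuousAt.comp (g := S) (f := fun χ : W => ((0 : V), χ)) hS.continuousAt
        (by fun_prop)).norm
    refine hc.eventually (gt_mem_nhds ?_)
    have : S (0, 0) = 0 := hzero
    simpa [this] using hm
  obtain ⟨χ, hχ, htχ, hsχ, hχr⟩ := ((Filter.not_eventually.1 hh).and_eventually
    (htube.and (hsmall.and (Metric.ball_mem_nhds (0 : W) hr)))).exists
  rw [dist_zero_right] at hχr
  have hnz : ∀ s : ℂ, ‖s‖ ≤ 1 → S (s • v, χ) ≠ 0 := fun s hs h0 =>
    hχ ((hball _ (hmem (hsv hs) hχr)).2 h0)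
  have hclos : closure (Metric.ball (0 : ℂ) ρ) = Metric.closedBall 0 ρ := closure_ball _ hρ0.ne'
  have hmax := Complex.norm_le_of_forall_mem_frontier_norm_le (U := Metric.ball (0 : ℂ) ρ)
    (f := fun s : ℂ => (S (s • v, χ))⁻¹) Metric.isBounded_ball
    (DifferentiableOn.diffContOnCl (by
      rw [hclos]
      intro s hs
      have hs1 : ‖s‖ ≤ 1 := (by simpa using hs : ‖s‖ ≤ ρ).trans hρ1
      exact ((hline hχr hs1).differentiableAt.inv (hnz s hs1)).differentiableWithinAt))
    (C := (m / 2)⁻¹) (by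
      intro s hs
      rw [frontier_ball _ hρ0.ne'] at hs
      rw [norm_inv]
      exact inv_anti₀ (by positivity) (htχ s hs).le)
    (z := 0) (by rw [hclos]; exact Metric.mem_closedBall_self hρ0.le)
  simp only [zero_smul, norm_inv] at hmax
  have hpos : 0 < ‖S (0, χ)‖ := norm_pos_iff.2 (by simpa using hnz 0 (by simp))
  rw [inv_le_inv₀ hpos (by positivity)] at hmax
  linarith

end MaximumModulus

section SegreMaps

/-- A function on `ℂⁿ × ℂ`, given in curried form, viewed on the product space. -/
abbrev unc₂ {W : Type*} (f : (Fin n → ℂ) → ℂ → W) : (Fin n → ℂ) × ℂ → W := fun p => f p.1 p.2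

theorem IsNormalDF.analyticAt {Q : (Fin n → ℂ) → (Fin n → ℂ) → ℂ → ℂ} (hQ : IsNormalDF Q) :
    AnalyticAt ℂ (unc Q) 0 := hQ.1.self_of_nhds

theorem IsNormalDF.apply_zero {Q : (Fin n → ℂ) → (Fin n → ℂ) → ℂ → ℂ} (hQ : IsNormalDF Q) :
    Q 0 0 0 = 0 := hQ.2.self_of_nhds.1

theorem IsNormalDF.fderiv_left {Q : (Fin n → ℂ) → (Fin n → ℂ) → ℂ → ℂ} (hQ : IsNormalDF Q) :
    ∀ᶠ p in 𝓝 (0 : (Fin n → ℂ) × ℂ), ∀ v ρ, fderiv ℂ (unc Q) (0, p.1, p.2) (0, v, ρ) = ρ := by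
  set ι : (Fin n → ℂ) × ℂ →L[ℂ] (Fin n → ℂ) × (Fin n → ℂ) × ℂ :=
    ContinuousLinearMap.prod 0 (ContinuousLinearMap.id ℂ _) with hι
  have ht : Tendsto ι (𝓝 0) (𝓝 0) := ι.continuous.tendsto' _ _ (map_zero _)
  filter_upwards [(ht.eventually hQ.2).eventually_nhds,
    ht.eventually hQ.analyticAt.eventually_analyticAt] with p hp hQp v ρ
  have h1 : unc Q ∘ ι =ᶠ[𝓝 p] fun q => q.2 := by
    filter_upwards [hp] with q hq using hq.1
  have h2 := (HasFDerivAt.comp p hQp.differentiableAt.hasFDerivAt ι.hasFDerivAt).fderiv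
  rw [h1.fderiv_eq, fderiv_snd] at h2
  exact (congrArg (fun L => L (v, ρ)) h2).symm

theorem IsNormalDF.fderiv_right {Q : (Fin n → ℂ) → (Fin n → ℂ) → ℂ → ℂ} (hQ : IsNormalDF Q) :
    ∀ᶠ p in 𝓝 (0 : (Fin n → ℂ) × ℂ), ∀ v ρ, fderiv ℂ (unc Q) (p.1, 0, p.2) (v, 0, ρ) = ρ := by
  set ι : (Fin n → ℂ) × ℂ →L[ℂ] (Fin n → ℂ) × (Fin n → ℂ) × ℂ :=
    (ContinuousLinearMap.fst ℂ _ _).prod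
      (ContinuousLinearMap.prod 0 (ContinuousLinearMap.snd ℂ _ _)) with hι
  have ht : Tendsto ι (𝓝 0) (𝓝 0) := ι.continuous.tendsto' _ _ (map_zero _)
  filter_upwards [(ht.eventually hQ.2).eventually_nhds,
    ht.eventually hQ.analyticAt.eventually_analyticAt] with p hp hQp v ρ
  have h1 : unc Q ∘ ι =ᶠ[𝓝 p] fun q => q.2 := by
    filter_upwards [hp] with q hq using hq.2
  have h2 := (HasFDerivAt.comp p hQp.differentiableAt.hasFDerivAt ι.hasFDerivAt).fderiv
  rw [h1.fderiv_eq, fderiv_snd] at h2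
  exact (congrArg (fun L => L (v, ρ)) h2).symm

theorem fderiv_jacz {f : (Fin n → ℂ) → ℂ → Fin n → ℂ} {z : Fin n → ℂ}
    (hf : DifferentiableAt ℂ (unc₂ f) (z, 0)) (v : Fin n → ℂ) :
    fderiv ℂ (unc₂ f) (z, 0) (v, 0) = (jacz f z).mulVec v := by
  have h : HasFDerivAt (fun z' => f z' 0) _ z :=
    HasFDerivAt.comp z (f := fun z' : Fin n → ℂ => (z', (0 : ℂ))) hf.hasFDerivAt
      ((hasFDerivAt_id z).prodMk (hasFDerivAt_const (0 : ℂ) z))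
  ext i
  have hi := (hasFDerivAt_pi'.1 h i).fderiv
  have hcol : ∀ j, jacz f z i j = fderiv ℂ (unc₂ f) (z, 0) (Pi.single j 1, 0) i := by
    intro j
    simpa [jacz, pd] using congrArg (fun L => L (Pi.single j 1)) hi
  have hsum := congrFun (fderiv_apply_eq_sum
    ((fderiv ℂ (unc₂ f) (z, 0)).comp (ContinuousLinearMap.inl ℂ (Fin n → ℂ) ℂ)) v) i
  simp only [ContinuousLinearMap.comp_apply, ContinuousLinearMap.inl_apply] at hsum
  rw [hsum]
  simp [Matrix.mulVec, dotProduct, hcol, mul_comm]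

theorem analyticAt_jacz {f : (Fin n → ℂ) → ℂ → Fin n → ℂ} (hf : AnalyticAt ℂ (unc₂ f) 0)
    (i j : Fin n) : AnalyticAt ℂ (fun z => jacz f z i j) 0 := by
  have h1 : AnalyticAt ℂ (fun z : Fin n → ℂ => fderiv ℂ (unc₂ f) (z, 0) (Pi.single j 1, 0)) 0 :=
    analyticAt_fderiv_apply hf (analyticAt_id.prod analyticAt_const) analyticAt_const rfl
  refine (analyticAt_pi_iff.1 h1 i).congr ?_
  filter_upwards [tendsto_prod_zero.eventually hf.eventually_analyticAt] with z hz
  rw [fderiv_jacz hz.differentiableAt]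
  simp

theorem analyticAt_det_jacz {f : (Fin n → ℂ) → ℂ → Fin n → ℂ} (hf : AnalyticAt ℂ (unc₂ f) 0) :
    AnalyticAt ℂ (fun z => (jacz f z).det) 0 := analyticAt_det (analyticAt_jacz hf)

/-- Nondegeneracy in the `χ` directions persists after pulling back by a generically
submersive map. -/
theorem ChiNondeg.comp {Q : (Fin n → ℂ) → (Fin n → ℂ) → ℂ → ℂ} (hQ : AnalyticAt ℂ (unc Q) 0)
    (hnd : ChiNondeg Q) {f : (Fin n → ℂ) → ℂ → Fin n → ℂ} (hf : AnalyticAt ℂ (unc₂ f) 0)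
    (hf0 : f 0 0 = 0) (hdet : ¬ ∀ᶠ z in 𝓝 (0 : Fin n → ℂ), (jacz f z).det = 0)
    {v : Fin n → ℂ}
    (hv : ∀ᶠ z in 𝓝 (0 : Fin n → ℂ), fderiv ℂ (unc Q) (f z 0, 0, 0) (0, v, 0) = 0) : v = 0 := by
  apply hnd
  have hG : AnalyticAt ℂ (fun z : Fin n → ℂ => fderiv ℂ (unc Q) (z, 0, 0) (0, v, 0)) 0 :=
    analyticAt_fderiv_apply hQ (analyticAt_id.prod analyticAt_const) analyticAt_const rfl
  obtain ⟨r, hr, hball⟩ := Metric.eventually_nhds_iff_ball.1 hG.eventually_analyticAt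
  have hfz : AnalyticAt ℂ (fun z : Fin n → ℂ => f z 0) 0 :=
    AnalyticAt.fun_comp (f := fun z : Fin n → ℂ => (z, (0 : ℂ))) hf
      (analyticAt_id.prod analyticAt_const)
  have hin : ∀ᶠ z in 𝓝 (0 : Fin n → ℂ), f z 0 ∈ Metric.ball (0 : Fin n → ℂ) r := by
    refine hfz.continuousAt.eventually (Metric.isOpen_ball.mem_nhds ?_)
    simpa [hf0] using hr
  obtain ⟨z, hz, hvz, hinz, hfz', hfuz⟩ := ((Filter.not_eventually.1 hdet).and_eventually
    (hv.eventually_nhds.and (hin.and (hfz.eventually_analyticAt.and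
      (tendsto_prod_zero.eventually hf.eventually_analyticAt))))).exists
  have hmap : map (fun z : Fin n → ℂ => f z 0) (𝓝 z) = 𝓝 (f z 0) := by
    refine hfz'.hasStrictFDerivAt.map_nhds_eq_of_surj ?_
    rw [LinearMap.range_eq_top]
    intro w
    refine ⟨(jacz f z)⁻¹.mulVec w, ?_⟩
    have h : HasFDerivAt (fun z' => f z' 0) _ z :=
      HasFDerivAt.comp z (f := fun z' : Fin n → ℂ => (z', (0 : ℂ)))
        hfuz.differentiableAt.hasFDerivAt
        ((hasFDerivAt_id z).prodMk (hasFDerivAt_const (0 : ℂ) z))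
    rw [h.fderiv]
    have h2 := fderiv_jacz hfuz.differentiableAt ((jacz f z)⁻¹.mulVec w)
    rw [Matrix.mulVec_mulVec, Matrix.mul_nonsing_inv _ (isUnit_iff_ne_zero.2 hz),
      Matrix.one_mulVec] at h2
    exact h2
  have hzero : (fun z : Fin n → ℂ => fderiv ℂ (unc Q) (z, 0, 0) (0, v, 0)) =ᶠ[𝓝 (f z 0)] 0 := by
    rw [← hmap]
    exact hvz
  have h3 := AnalyticOnNhd.eqOn_zero_of_preconnected_of_eventuallyEq_zero
    (fun q hq => hball q hq) (convex_ball (0 : Fin n → ℂ) r).isPreconnected hinz hzero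
  exact Filter.eventually_of_mem (Metric.ball_mem_nhds _ hr) fun q hq => h3 hq

theorem frequently_det_ne_zero {u : (Fin n → ℂ) → (Fin n → ℂ)}
    (hu : ∀ v : Fin n → ℂ, (∀ᶠ z in 𝓝 (0 : Fin n → ℂ), u z ⬝ᵥ v = 0) → v = 0) :
    ∃ᶠ zs in 𝓝 (0 : Fin n → Fin n → ℂ), (Matrix.of fun i => u (zs i)).det ≠ 0 := by
  rw [Filter.frequently_iff]
  intro U hU
  obtain ⟨r, hr, hball⟩ := Metric.nhds_basis_ball.mem_iff.1 hU
  have hspan : Submodule.span ℂ (u '' Metric.ball (0 : Fin n → ℂ) r) = ⊤ := by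
    by_contra hne
    obtain ⟨φ, hφ, hφ'⟩ := Submodule.exists_le_ker_of_lt_top _ (lt_top_iff_ne_top.2 hne)
    apply hφ
    have hφv : ∀ w, φ w = w ⬝ᵥ fun i => φ (Pi.single i 1) := by
      intro w
      rw [LinearMap.pi_apply_eq_sum_univ φ w]
      simp only [dotProduct, smul_eq_mul]
      refine Finset.sum_congr rfl fun i _ => ?_
      congr 2
      ext j
      simp [Pi.single_apply, eq_comm]
    have hv := hu (fun i => φ (Pi.single i 1)) (by
      filter_upwards [Metric.ball_mem_nhds (0 : Fin n → ℂ) hr] with z hz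
      rw [← hφv]
      exact hφ' (Submodule.subset_span ⟨z, hz, rfl⟩))
    ext w
    simp [congrFun hv]
  obtain ⟨b, hb, -, hli⟩ := Submodule.exists_fun_fin_finrank_span_eq ℂ
    (u '' Metric.ball (0 : Fin n → ℂ) r)
  have hcard : Module.finrank ℂ (Submodule.span ℂ (u '' Metric.ball (0 : Fin n → ℂ) r)) = n := by
    rw [hspan]; simp
  choose zs hzs hzs' using fun i : Fin n => hb (Fin.cast hcard.symm i)
  refine ⟨zs, hball ?_, ?_⟩
  · rw [mem_ball_zero_iff, pi_norm_lt_iff hr]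
    exact fun i => mem_ball_zero_iff.1 (hzs i)
  · have h1 : LinearIndependent ℂ (fun i => u (zs i)) := by
      have : (fun i => u (zs i)) = b ∘ Fin.cast hcard.symm := funext hzs'
      rw [this]
      exact hli.comp _ (Fin.cast_injective _)
    have h2 := Matrix.linearIndependent_rows_iff_isUnit.1
      (show LinearIndependent ℂ (Matrix.of fun i => u (zs i)).row from h1)
    exact ((Matrix.isUnit_iff_isUnit_det _).1 h2).ne_zero

end SegreMaps

section SegreIdentities

variable {Q Q' : (Fin n → ℂ) → (Fin n → ℂ) → ℂ → ℂ} {f ft : (Fin n → ℂ) → ℂ → Fin n → ℂ}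
  {g gt : (Fin n → ℂ) → ℂ → ℂ}

/-- The point of the target hypersurface over which derivatives of `Q'` are evaluated. -/
def segrePoint (Q : (Fin n → ℂ) → (Fin n → ℂ) → ℂ → ℂ) (f ft : (Fin n → ℂ) → ℂ → Fin n → ℂ) :
    (Fin n → ℂ) × (Fin n → ℂ) → (Fin n → ℂ) × (Fin n → ℂ) × ℂ :=
  fun p => (f p.1 (Q p.1 p.2 0), ft p.2 0, 0)

/-- The factor `g_w - Q'_z f_w` along `{τ = 0}`. -/
noncomputable def segreFactor (Q Q' : (Fin n → ℂ) → (Fin n → ℂ) → ℂ → ℂ)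
    (f : (Fin n → ℂ) → ℂ → Fin n → ℂ) (g : (Fin n → ℂ) → ℂ → ℂ)
    (ft : (Fin n → ℂ) → ℂ → Fin n → ℂ) : (Fin n → ℂ) × (Fin n → ℂ) → ℂ :=
  fun p => fderiv ℂ (unc₂ g) (p.1, Q p.1 p.2 0) (0, 1) -
    fderiv ℂ (unc Q') (segrePoint Q f ft p) (fderiv ℂ (unc₂ f) (p.1, Q p.1 p.2 0) (0, 1), 0, 0)

theorem IsHSPM.analyticAt_f (h : IsHSPM Q Q' f g ft gt) : AnalyticAt ℂ (unc₂ f) 0 :=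
  h.1.self_of_nhds

theorem IsHSPM.analyticAt_g (h : IsHSPM Q Q' f g ft gt) : AnalyticAt ℂ (unc₂ g) 0 :=
  h.2.1.self_of_nhds

theorem IsHSPM.analyticAt_ft (h : IsHSPM Q Q' f g ft gt) : AnalyticAt ℂ (unc₂ ft) 0 :=
  h.2.2.1.self_of_nhds

theorem IsHSPM.analyticAt_gt (h : IsHSPM Q Q' f g ft gt) : AnalyticAt ℂ (unc₂ gt) 0 :=
  h.2.2.2.1.self_of_nhds

theorem IsHSPM.f_zero (h : IsHSPM Q Q' f g ft gt) : f 0 0 = 0 := h.2.2.2.2.1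

theorem IsHSPM.g_zero (h : IsHSPM Q Q' f g ft gt) : g 0 0 = 0 := h.2.2.2.2.2.1

theorem IsHSPM.ft_zero (h : IsHSPM Q Q' f g ft gt) : ft 0 0 = 0 := h.2.2.2.2.2.2.1

theorem IsHSPM.gt_zero (h : IsHSPM Q Q' f g ft gt) : gt 0 0 = 0 := h.2.2.2.2.2.2.2.1

theorem IsHSPM.eventually_eq (h : IsHSPM Q Q' f g ft gt) :
    ∀ᶠ p in 𝓝 (0 : (Fin n → ℂ) × (Fin n → ℂ) × ℂ),
      g p.1 (Q p.1 p.2.1 p.2.2) =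
        Q' (f p.1 (Q p.1 p.2.1 p.2.2)) (ft p.2.1 p.2.2) (gt p.2.1 p.2.2) := h.2.2.2.2.2.2.2.2

theorem analyticAt_apply_graph (hQ : IsNormalDF Q) :
    AnalyticAt ℂ (fun p : (Fin n → ℂ) × (Fin n → ℂ) => (p.1, Q p.1 p.2 0)) 0 := by
  refine analyticAt_fst.prod ?_
  exact AnalyticAt.fun_comp_of_eq (f := fun p : (Fin n → ℂ) × (Fin n → ℂ) => (p.1, p.2, (0 : ℂ)))
    hQ.analyticAt (analyticAt_fst.prod (analyticAt_snd.prod analyticAt_const)) rfl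

theorem graph_zero (hQ : IsNormalDF Q) : ((0 : Fin n → ℂ), Q 0 0 0) = 0 := by
  rw [hQ.apply_zero]; rfl

theorem segrePoint_zero (hQ : IsNormalDF Q) (h : IsHSPM Q Q' f g ft gt) :
    segrePoint Q f ft 0 = 0 := by
  simp [segrePoint, hQ.apply_zero, h.f_zero, h.ft_zero]

theorem analyticAt_segrePoint (hQ : IsNormalDF Q) (h : IsHSPM Q Q' f g ft gt) :
    AnalyticAt ℂ (segrePoint Q f ft) 0 := by
  refine AnalyticAt.prod ?_ (AnalyticAt.prod ?_ analyticAt_const)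
  · exact AnalyticAt.fun_comp_of_eq (f := fun p : (Fin n → ℂ) × (Fin n → ℂ) => (p.1, Q p.1 p.2 0))
      h.analyticAt_f (analyticAt_apply_graph hQ) (graph_zero hQ)
  · exact AnalyticAt.fun_comp_of_eq (f := fun p : (Fin n → ℂ) × (Fin n → ℂ) => (p.2, (0 : ℂ)))
      h.analyticAt_ft (analyticAt_snd.prod analyticAt_const) rfl

theorem tendsto_segrePoint (hQ : IsNormalDF Q) (h : IsHSPM Q Q' f g ft gt) :
    Tendsto (segrePoint Q f ft) (𝓝 0) (𝓝 0) := by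
  simpa [ContinuousAt, segrePoint_zero hQ h] using (analyticAt_segrePoint hQ h).continuousAt

theorem analyticAt_segreFactor (hQ : IsNormalDF Q) (hQ' : IsNormalDF Q')
    (h : IsHSPM Q Q' f g ft gt) : AnalyticAt ℂ (segreFactor Q Q' f g ft) 0 := by
  refine AnalyticAt.sub ?_ ?_
  · exact analyticAt_fderiv_apply h.analyticAt_g (analyticAt_apply_graph hQ) analyticAt_const
      (graph_zero hQ)
  · refine analyticAt_fderiv_apply hQ'.analyticAt (analyticAt_segrePoint hQ h) ?_
      (segrePoint_zero hQ h)
    refine AnalyticAt.prod ?_ analyticAt_const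
    exact analyticAt_fderiv_apply h.analyticAt_f (analyticAt_apply_graph hQ) analyticAt_const
      (graph_zero hQ)

theorem IsHSPM.gt_eq_zero (hQ : IsNormalDF Q) (hQ' : IsNormalDF Q')
    (h : IsHSPM Q Q' f g ft gt) : ∀ᶠ χ in 𝓝 (0 : Fin n → ℂ), gt χ 0 = 0 := by
  have ht : Tendsto (fun χ : Fin n → ℂ => ((0 : Fin n → ℂ), χ, (0 : ℂ))) (𝓝 0) (𝓝 0) :=
    (by fun_prop : Continuous fun χ : Fin n → ℂ =>
      ((0 : Fin n → ℂ), χ, (0 : ℂ))).tendsto' _ _ rfl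
  have hft : Tendsto (fun χ : Fin n → ℂ => ((0 : Fin n → ℂ), ft χ 0, gt χ 0)) (𝓝 0) (𝓝 0) := by
    have h1 : AnalyticAt ℂ (fun χ : Fin n → ℂ => ((0 : Fin n → ℂ), ft χ 0, gt χ 0)) 0 := by
      refine analyticAt_const.prod (AnalyticAt.prod ?_ ?_)
      · exact AnalyticAt.fun_comp (f := fun p : Fin n → ℂ => (p, (0 : ℂ)))
          h.analyticAt_ft (analyticAt_id.prod analyticAt_const)
      · exact AnalyticAt.fun_comp (f := fun p : Fin n → ℂ => (p, (0 : ℂ)))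
          h.analyticAt_gt (analyticAt_id.prod analyticAt_const)
    simpa [ContinuousAt, h.ft_zero, h.gt_zero, ← Prod.zero_eq_mk] using h1.continuousAt
  filter_upwards [ht.eventually h.eventually_eq, ht.eventually hQ.2, hft.eventually hQ'.2]
    with χ h1 h2 h3
  rw [h2.1, h.g_zero, h.f_zero, h3.1] at h1
  exact h1.symm

theorem segreFactor_mul (hQ : IsNormalDF Q) (hQ' : IsNormalDF Q')
    (h : IsHSPM Q Q' f g ft gt) : ∀ᶠ p in 𝓝 (0 : (Fin n → ℂ) × (Fin n → ℂ)), ∀ v ρ,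
      segreFactor Q Q' f g ft p * fderiv ℂ (unc Q) (p.1, p.2, 0) (0, v, ρ) =
        fderiv ℂ (unc Q') (segrePoint Q f ft p)
          (0, fderiv ℂ (unc₂ ft) (p.2, 0) (v, ρ), fderiv ℂ (unc₂ gt) (p.2, 0) (v, ρ)) := by
  have ht : Tendsto (fun p : (Fin n → ℂ) × (Fin n → ℂ) => (p.1, p.2, (0 : ℂ))) (𝓝 0) (𝓝 0) :=
    (by fun_prop : Continuous fun p : (Fin n → ℂ) × (Fin n → ℂ) =>
      (p.1, p.2, (0 : ℂ))).tendsto' _ _ rfl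
  have hgr : Tendsto (fun p : (Fin n → ℂ) × (Fin n → ℂ) => (p.1, Q p.1 p.2 0)) (𝓝 0) (𝓝 0) := by
    have := (analyticAt_apply_graph hQ).continuousAt
    simpa [ContinuousAt, graph_zero hQ] using this
  have hχ : Tendsto (fun p : (Fin n → ℂ) × (Fin n → ℂ) => (p.2, (0 : ℂ))) (𝓝 0) (𝓝 0) :=
    (by fun_prop : Continuous fun p : (Fin n → ℂ) × (Fin n → ℂ) =>
      (p.2, (0 : ℂ))).tendsto' _ _ rfl
  filter_upwards [(ht.eventually h.eventually_eq.eventually_nhds),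
    ht.eventually hQ.analyticAt.eventually_analyticAt,
    hgr.eventually h.analyticAt_g.eventually_analyticAt,
    hgr.eventually h.analyticAt_f.eventually_analyticAt,
    hχ.eventually h.analyticAt_ft.eventually_analyticAt,
    hχ.eventually h.analyticAt_gt.eventually_analyticAt,
    (tendsto_segrePoint hQ h).eventually hQ'.analyticAt.eventually_analyticAt,
    (continuous_snd.tendsto' (0 : (Fin n → ℂ) × (Fin n → ℂ)) 0 rfl).eventually
      (h.gt_eq_zero hQ hQ')]
    with p heq hQp hgp hfp hftp hgtp hQ'p hgt0 v ρ
  set P : (Fin n → ℂ) × (Fin n → ℂ) × ℂ := (p.1, p.2, 0) with hP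
  have dQ := hQp.differentiableAt.hasFDerivAt
  have dgr : HasFDerivAt (fun q : (Fin n → ℂ) × (Fin n → ℂ) × ℂ => (q.1, unc Q q)) _ P :=
    hasFDerivAt_fst.prodMk dQ
  have dg := HasFDerivAt.comp P (g := unc₂ g)
    (f := fun q : (Fin n → ℂ) × (Fin n → ℂ) × ℂ => (q.1, unc Q q))
    hgp.differentiableAt.hasFDerivAt dgr
  have df := HasFDerivAt.comp P (g := unc₂ f)
    (f := fun q : (Fin n → ℂ) × (Fin n → ℂ) × ℂ => (q.1, unc Q q))
    hfp.differentiableAt.hasFDerivAt dgr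
  have dft := HasFDerivAt.comp P (g := unc₂ ft)
    (f := fun q : (Fin n → ℂ) × (Fin n → ℂ) × ℂ => q.2)
    hftp.differentiableAt.hasFDerivAt hasFDerivAt_snd
  have dgt := HasFDerivAt.comp P (g := unc₂ gt)
    (f := fun q : (Fin n → ℂ) × (Fin n → ℂ) × ℂ => q.2)
    hgtp.differentiableAt.hasFDerivAt hasFDerivAt_snd
  have hpt : segrePoint Q f ft p = (unc₂ f (P.1, unc Q P), unc₂ ft P.2, unc₂ gt P.2) := by
    simp [segrePoint, hP, hgt0]
  have dR := HasFDerivAt.comp P (g := unc Q')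
    (f := fun q : (Fin n → ℂ) × (Fin n → ℂ) × ℂ =>
      (unc₂ f (q.1, unc Q q), unc₂ ft q.2, unc₂ gt q.2))
    (hpt ▸ hQ'p.differentiableAt.hasFDerivAt) (df.prodMk (dft.prodMk dgt))
  have hd := (dg.congr_of_eventuallyEq (EventuallyEq.symm heq)).unique dR
  have h1 := congrArg (fun L => L (0, v, ρ)) hd
  simp only [ContinuousLinearMap.comp_apply, ContinuousLinearMap.prod_apply,
    ContinuousLinearMap.coe_fst', ContinuousLinearMap.coe_snd'] at h1
  rw [← hpt] at h1
  set d := fderiv ℂ (unc Q) P (0, v, ρ) with hdd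
  have hsc : ((0 : Fin n → ℂ), d) = d • ((0 : Fin n → ℂ), (1 : ℂ)) := by simp
  rw [hsc, map_smul, map_smul] at h1
  have hsum : ∀ (a : Fin n → ℂ) (b : (Fin n → ℂ) × ℂ),
      fderiv ℂ (unc Q') (segrePoint Q f ft p) (d • a, b) =
        d * fderiv ℂ (unc Q') (segrePoint Q f ft p) (a, 0) +
          fderiv ℂ (unc Q') (segrePoint Q f ft p) (0, b) := by
    intro a b
    rw [← smul_eq_mul, ← map_smul, ← map_add]
    simp
  rw [hsum, smul_eq_mul] at h1
  simp only [segreFactor]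
  rw [sub_mul, mul_comm, sub_eq_iff_eq_add]
  change d * fderiv ℂ (unc₂ g) (P.1, unc Q P) (0, 1) = _
  rw [h1]
  have h0 : ((0 : Fin n → ℂ), (0 : ℂ)) = 0 := rfl
  rw [h0, add_comm, mul_comm]

end SegreIdentities

section Transversality

variable {Q Q' : (Fin n → ℂ) → (Fin n → ℂ) → ℂ → ℂ} {f ft : (Fin n → ℂ) → ℂ → Fin n → ℂ}
  {g gt : (Fin n → ℂ) → ℂ → ℂ}

theorem tendsto_snd_prod_zero :
    Tendsto (fun p : (Fin n → ℂ) × (Fin n → ℂ) => (p.2, (0 : ℂ))) (𝓝 0) (𝓝 0) :=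
  (by fun_prop : Continuous fun p : (Fin n → ℂ) × (Fin n → ℂ) =>
    (p.2, (0 : ℂ))).tendsto' _ _ rfl

theorem segreFactor_mul_chi (hQ : IsNormalDF Q) (hQ' : IsNormalDF Q')
    (h : IsHSPM Q Q' f g ft gt) : ∀ᶠ p in 𝓝 (0 : (Fin n → ℂ) × (Fin n → ℂ)), ∀ v,
      segreFactor Q Q' f g ft p * fderiv ℂ (unc Q) (p.1, p.2, 0) (0, v, 0) =
        fderiv ℂ (unc Q') (segrePoint Q f ft p) (0, (jacz ft p.2).mulVec v, 0) := by
  filter_upwards [segreFactor_mul hQ hQ' h,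
    tendsto_snd_prod_zero.eventually h.analyticAt_ft.eventually_analyticAt,
    tendsto_snd_prod_zero.eventually h.analyticAt_gt.eventually_analyticAt,
    (continuous_snd.tendsto' (0 : (Fin n → ℂ) × (Fin n → ℂ)) 0 rfl).eventually
      (h.gt_eq_zero hQ hQ').eventually_nhds] with p hp hft hgt hgt0 v
  rw [hp v 0, fderiv_jacz hft.differentiableAt]
  have h1 : HasFDerivAt (fun χ => gt χ 0) _ p.2 :=
    HasFDerivAt.comp p.2 (f := fun χ : Fin n → ℂ => (χ, (0 : ℂ))) hgt.differentiableAt.hasFDerivAt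
      ((hasFDerivAt_id p.2).prodMk (hasFDerivAt_const (0 : ℂ) p.2))
  have h2 := h1.unique ((hasFDerivAt_const (0 : ℂ) p.2).congr_of_eventuallyEq hgt0)
  have h3 : fderiv ℂ (unc₂ gt) (p.2, 0) (v, 0) = 0 := congrArg (fun L => L v) h2
  rw [h3]

/-- A function whose product with the Segre factor only vanishes with `det f̃_χ` and `g̃_τ`. -/
noncomputable def segreCofactor (Q : (Fin n → ℂ) → (Fin n → ℂ) → ℂ → ℂ)
    (ft : (Fin n → ℂ) → ℂ → Fin n → ℂ) : (Fin n → ℂ) × (Fin n → ℂ) → ℂ :=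
  fun p => (jacz ft p.2).det * fderiv ℂ (unc Q) (p.1, p.2, 0) (0, 0, 1) -
    fderiv ℂ (unc Q) (p.1, p.2, 0)
      (0, (jacz ft p.2).adjugate.mulVec (fderiv ℂ (unc₂ ft) (p.2, 0) (0, 1)), 0)

theorem segreFactor_mul_segreCofactor (hQ : IsNormalDF Q) (hQ' : IsNormalDF Q')
    (h : IsHSPM Q Q' f g ft gt) : ∀ᶠ p in 𝓝 (0 : (Fin n → ℂ) × (Fin n → ℂ)),
      segreFactor Q Q' f g ft p * segreCofactor Q ft p =
        (jacz ft p.2).det * fderiv ℂ (unc₂ gt) (p.2, 0) (0, 1) *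
          fderiv ℂ (unc Q') (segrePoint Q f ft p) (0, 0, 1) := by
  have key : ∀ (L : (Fin n → ℂ) × (Fin n → ℂ) × ℂ →L[ℂ] ℂ) (b : Fin n → ℂ) (γ d : ℂ),
      d * L (0, b, γ) - L (0, d • b, 0) = d * γ * L (0, 0, 1) := by
    intro L b γ d
    have h1 : ((0, b, γ) : (Fin n → ℂ) × (Fin n → ℂ) × ℂ) = (0, b, 0) + γ • (0, 0, 1) := by simp
    have h2 : ((0, d • b, 0) : (Fin n → ℂ) × (Fin n → ℂ) × ℂ) = d • (0, b, 0) := by simp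
    rw [h1, h2, map_add, map_smul, map_smul, smul_eq_mul, smul_eq_mul]
    ring
  filter_upwards [segreFactor_mul hQ hQ' h, segreFactor_mul_chi hQ hQ' h] with p h1 h2
  rw [segreCofactor, mul_sub, h2, Matrix.mulVec_mulVec, Matrix.mul_adjugate, Matrix.smul_mulVec,
    Matrix.one_mulVec, mul_left_comm, h1]
  exact key _ _ _ _

theorem analyticAt_segreCofactor (hQ : IsNormalDF Q) (h : IsHSPM Q Q' f g ft gt) :
    AnalyticAt ℂ (segreCofactor Q ft) 0 := by
  have hj : ∀ i j, AnalyticAt ℂ (fun p : (Fin n → ℂ) × (Fin n → ℂ) => jacz ft p.2 i j) 0 :=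
    fun i j => AnalyticAt.fun_comp_of_eq (f := fun p : (Fin n → ℂ) × (Fin n → ℂ) => p.2)
      (analyticAt_jacz h.analyticAt_ft i j) analyticAt_snd rfl
  have hpt : AnalyticAt ℂ (fun p : (Fin n → ℂ) × (Fin n → ℂ) => (p.1, p.2, (0 : ℂ))) 0 :=
    analyticAt_fst.prod (analyticAt_snd.prod analyticAt_const)
  have hb : AnalyticAt ℂ (fun p : (Fin n → ℂ) × (Fin n → ℂ) =>
      fderiv ℂ (unc₂ ft) (p.2, 0) (0, 1)) 0 :=
    analyticAt_fderiv_apply h.analyticAt_ft (analyticAt_snd.prod analyticAt_const)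
      analyticAt_const rfl
  refine AnalyticAt.sub (AnalyticAt.mul (analyticAt_det hj) ?_) ?_
  · exact analyticAt_fderiv_apply hQ.analyticAt hpt analyticAt_const rfl
  · refine analyticAt_fderiv_apply hQ.analyticAt hpt ?_ rfl
    refine analyticAt_const.prod (AnalyticAt.prod ?_ analyticAt_const)
    rw [analyticAt_pi_iff]
    intro i
    simp only [Matrix.mulVec, dotProduct]
    exact Finset.analyticAt_fun_sum _ fun j _ =>
      (analyticAt_adjugate hj i j).mul (analyticAt_pi_iff.1 hb j)

theorem segreCofactor_not_eventually_zero (hQ : IsNormalDF Q)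
    (hψ : ¬ ∀ᶠ χ in 𝓝 (0 : Fin n → ℂ), (jacz ft χ).det = 0) :
    ¬ ∀ᶠ p in 𝓝 (0 : (Fin n → ℂ) × (Fin n → ℂ)), segreCofactor Q ft p = 0 := by
  intro h0
  apply hψ
  have ht : Tendsto (fun χ : Fin n → ℂ => ((0 : Fin n → ℂ), χ)) (𝓝 0) (𝓝 0) :=
    (by fun_prop : Continuous fun χ : Fin n → ℂ => ((0 : Fin n → ℂ), χ)).tendsto' _ _ rfl
  filter_upwards [ht.eventually h0, tendsto_prod_zero.eventually hQ.fderiv_left] with χ h1 h2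
  simpa [segreCofactor, h2] using h1

theorem eventually_fderiv_tau_ne_zero (hQ : IsNormalDF Q) (hQ' : IsNormalDF Q')
    (h : IsHSPM Q Q' f g ft gt) : ∀ᶠ p in 𝓝 (0 : (Fin n → ℂ) × (Fin n → ℂ)),
      fderiv ℂ (unc Q') (segrePoint Q f ft p) (0, 0, 1) ≠ 0 := by
  have h1 : AnalyticAt ℂ (fun p => fderiv ℂ (unc Q') (segrePoint Q f ft p) (0, 0, 1)) 0 :=
    analyticAt_fderiv_apply hQ'.analyticAt (analyticAt_segrePoint hQ h) analyticAt_const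
      (segrePoint_zero hQ h)
  refine h1.continuousAt.eventually_ne ?_
  rw [segrePoint_zero hQ h]
  have := hQ'.fderiv_left.self_of_nhds 0 1
  exact fun h0 => one_ne_zero (this.symm.trans h0)

theorem segrePoint_prod_zero (hQ : IsNormalDF Q) (h : IsHSPM Q Q' f g ft gt) :
    ∀ᶠ z in 𝓝 (0 : Fin n → ℂ), segrePoint Q f ft (z, 0) = (f z 0, 0, 0) := by
  have ht : Tendsto (fun z : Fin n → ℂ => (z, (0 : Fin n → ℂ), (0 : ℂ))) (𝓝 0) (𝓝 0) :=
    (by fun_prop : Continuous fun z : Fin n → ℂ =>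
      (z, (0 : Fin n → ℂ), (0 : ℂ))).tendsto' _ _ rfl
  filter_upwards [ht.eventually hQ.2] with z hz
  have hz2 : Q z 0 0 = 0 := hz.2
  simp [segrePoint, hz2, h.ft_zero]

theorem gt_tau_not_eventually_zero (hn : 1 ≤ n) (hQ : IsNormalDF Q) (hQ' : IsNormalDF Q')
    (h : IsHSPM Q Q' f g ft gt) (hnd : ChiNondeg Q')
    (hφ : ¬ ∀ᶠ z in 𝓝 (0 : Fin n → ℂ), (jacz f z).det = 0)
    (hψ : ¬ ∀ᶠ χ in 𝓝 (0 : Fin n → ℂ), (jacz ft χ).det = 0) :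
    ¬ ∀ᶠ χ in 𝓝 (0 : Fin n → ℂ), fderiv ℂ (unc₂ gt) (χ, 0) (0, 1) = 0 := by
  intro hγ
  have hsnd := continuous_snd.tendsto' (0 : (Fin n → ℂ) × (Fin n → ℂ)) 0 rfl
  have hS : ∀ᶠ p in 𝓝 (0 : (Fin n → ℂ) × (Fin n → ℂ)), segreFactor Q Q' f g ft p = 0 := by
    refine eventually_eq_zero_of_mul (analyticAt_segreCofactor hQ h)
      (analyticAt_segreFactor hQ hQ' h) ?_ (segreCofactor_not_eventually_zero hQ hψ)
    filter_upwards [segreFactor_mul_segreCofactor hQ hQ' h, hsnd.eventually hγ] with p h1 h2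
    rw [mul_comm, h1, h2]
    ring
  have hv : ∀ v : Fin n → ℂ, v = 0 := by
    intro v
    refine hnd.comp hQ'.analyticAt h.analyticAt_f h.f_zero hφ ?_
    have h1 : ∀ᶠ p in 𝓝 (0 : (Fin n → ℂ) × (Fin n → ℂ)),
        fderiv ℂ (unc Q') (segrePoint Q f ft p) (0, v, 0) = 0 := by
      refine eventually_eq_zero_of_mul (F := fun p => (jacz ft p.2).det) ?_ ?_ ?_ ?_
      · exact AnalyticAt.fun_comp_of_eq (f := fun p : (Fin n → ℂ) × (Fin n → ℂ) => p.2)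
          (analyticAt_det_jacz h.analyticAt_ft) analyticAt_snd rfl
      · exact analyticAt_fderiv_apply hQ'.analyticAt (analyticAt_segrePoint hQ h)
          analyticAt_const (segrePoint_zero hQ h)
      · filter_upwards [hS, segreFactor_mul_chi hQ hQ' h] with p hp0 hp
        have h2 := hp ((jacz ft p.2).adjugate.mulVec v)
        rw [hp0, zero_mul, Matrix.mulVec_mulVec, Matrix.mul_adjugate, Matrix.smul_mulVec,
          Matrix.one_mulVec] at h2
        have h3 : ((0, (jacz ft p.2).det • v, 0) : (Fin n → ℂ) × (Fin n → ℂ) × ℂ) =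
            (jacz ft p.2).det • (0, v, 0) := by simp
        rw [h3, map_smul, smul_eq_mul] at h2
        exact h2.symm
      · intro h0
        have ht : Tendsto (fun χ : Fin n → ℂ => ((0 : Fin n → ℂ), χ)) (𝓝 0) (𝓝 0) :=
          (by fun_prop : Continuous fun χ : Fin n → ℂ => ((0 : Fin n → ℂ), χ)).tendsto' _ _ rfl
        exact hψ (ht.eventually h0)
    filter_upwards [tendsto_prod_zero.eventually h1, segrePoint_prod_zero hQ h] with z hz hz'
    rwa [hz'] at hz
  have := congrFun (hv (Pi.single ⟨0, hn⟩ 1)) ⟨0, hn⟩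
  simp at this

theorem segreFactor_prod_zero (hQ : IsNormalDF Q) (hQ' : IsNormalDF Q')
    (h : IsHSPM Q Q' f g ft gt) : ∀ᶠ z in 𝓝 (0 : Fin n → ℂ),
      segreFactor Q Q' f g ft (z, 0) = fderiv ℂ (unc₂ g) (z, 0) (0, 1) := by
  have ht : Tendsto (fun z : Fin n → ℂ => (z, (0 : Fin n → ℂ), (0 : ℂ))) (𝓝 0) (𝓝 0) :=
    (by fun_prop : Continuous fun z : Fin n → ℂ =>
      (z, (0 : Fin n → ℂ), (0 : ℂ))).tendsto' _ _ rfl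
  have hf : Tendsto (fun z : Fin n → ℂ => (f z 0, (0 : ℂ))) (𝓝 0) (𝓝 0) := by
    have h1 : AnalyticAt ℂ (fun z : Fin n → ℂ => (f z 0, (0 : ℂ))) 0 :=
      AnalyticAt.prod (AnalyticAt.fun_comp_of_eq (f := fun p : Fin n → ℂ => (p, (0 : ℂ)))
        h.analyticAt_f (analyticAt_id.prod analyticAt_const) rfl) analyticAt_const
    simpa [ContinuousAt, h.f_zero, ← Prod.zero_eq_mk] using h1.continuousAt
  filter_upwards [ht.eventually hQ.2, segrePoint_prod_zero hQ h,
    hf.eventually hQ'.fderiv_right] with z hz hz' hr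
  have hz2 : Q z 0 0 = 0 := hz.2
  simp only [segreFactor, hz', hz2]
  rw [hr, sub_zero]

/-- Transversality at the origin. -/
theorem segreFactor_zero_ne_zero (hn : 1 ≤ n) (hQ : IsNormalDF Q) (hQ' : IsNormalDF Q')
    (h : IsHSPM Q Q' f g ft gt) (hnd : ChiNondeg Q')
    (hφ : ¬ ∀ᶠ z in 𝓝 (0 : Fin n → ℂ), (jacz f z).det = 0)
    (hψ : ¬ ∀ᶠ χ in 𝓝 (0 : Fin n → ℂ), (jacz ft χ).det = 0)
    (hg : ¬ ∀ᶠ z in 𝓝 (0 : Fin n → ℂ), fderiv ℂ (unc₂ g) (z, 0) (0, 1) = 0) :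
    segreFactor Q Q' f g ft 0 ≠ 0 := by
  have hγ := gt_tau_not_eventually_zero hn hQ hQ' h hnd hφ hψ
  refine ne_zero_of_zeros_fibered (analyticAt_segreFactor hQ hQ' h)
    (h := fun χ => (jacz ft χ).det * fderiv ℂ (unc₂ gt) (χ, 0) (0, 1)) ?_ ?_ ?_
  · intro h0
    apply hg
    filter_upwards [h0, segreFactor_prod_zero hQ hQ' h] with z h1 h2
    rw [← h2, h1]
  · intro h0
    refine hγ (eventually_eq_zero_of_mul (analyticAt_det_jacz h.analyticAt_ft) ?_ h0 hψ)
    exact analyticAt_fderiv_apply h.analyticAt_gt (analyticAt_id.prod analyticAt_const)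
      analyticAt_const rfl
  · filter_upwards [segreFactor_mul_segreCofactor hQ hQ' h,
      eventually_fderiv_tau_ne_zero hQ hQ' h] with p h1 h2 hp0
    rw [hp0, zero_mul] at h1
    exact (mul_eq_zero.1 h1.symm).resolve_right h2

end Transversality

section Determinants

variable {Q Q' : (Fin n → ℂ) → (Fin n → ℂ) → ℂ → ℂ} {f ft : (Fin n → ℂ) → ℂ → Fin n → ℂ}
  {g gt : (Fin n → ℂ) → ℂ → ℂ}

/-- The determinant of the `χ`-gradients of `Q(z,χ,0)` at `n` chosen points `z`. -/
noncomputable def chiDet (Q : (Fin n → ℂ) → (Fin n → ℂ) → ℂ → ℂ) (zs : Fin n → Fin n → ℂ)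
    (χ : Fin n → ℂ) : ℂ :=
  (Matrix.of fun i j => fderiv ℂ (unc Q) (zs i, χ, 0) (0, Pi.single j 1, 0)).det

theorem fderiv_chi_eq_dotProduct (L : (Fin n → ℂ) × (Fin n → ℂ) × ℂ →L[ℂ] ℂ) (v : Fin n → ℂ) :
    L (0, v, 0) = (fun k => L (0, Pi.single k 1, 0)) ⬝ᵥ v := by
  have := fderiv_apply_eq_sum (L.comp ((ContinuousLinearMap.inr ℂ (Fin n → ℂ) _).comp
    (ContinuousLinearMap.inl ℂ (Fin n → ℂ) ℂ))) v
  simpa [dotProduct, mul_comm] using this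

theorem eventually_forall_slices {P : (Fin n → ℂ) × (Fin n → ℂ) → Prop}
    (hP : ∀ᶠ p in 𝓝 (0 : (Fin n → ℂ) × (Fin n → ℂ)), P p) :
    ∀ᶠ zs in 𝓝 (0 : Fin n → Fin n → ℂ), ∀ᶠ χ in 𝓝 (0 : Fin n → ℂ), ∀ i, P (zs i, χ) := by
  have h1 : ∀ᶠ z in 𝓝 (0 : Fin n → ℂ), ∀ᶠ χ in 𝓝 (0 : Fin n → ℂ), P (z, χ) := by
    filter_upwards [tendsto_prod_zero.eventually hP.eventually_nhds] with z hz
    exact (show ContinuousAt (fun χ : Fin n → ℂ => (z, χ)) 0 by fun_prop).eventually hz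
  have h2 : ∀ᶠ zs in 𝓝 (0 : Fin n → Fin n → ℂ), ∀ i, ∀ᶠ χ in 𝓝 (0 : Fin n → ℂ),
      P (zs i, χ) :=
    eventually_all.2 fun i =>
      ((continuous_apply i).tendsto' (0 : Fin n → Fin n → ℂ) 0 rfl).eventually h1
  filter_upwards [h2] with zs hzs using eventually_all.2 hzs

theorem exists_chiDet_eq_mul (hQ : IsNormalDF Q) (hQ' : IsNormalDF Q')
    (h : IsHSPM Q Q' f g ft gt) (hnd : ChiNondeg Q')
    (hφ : ¬ ∀ᶠ z in 𝓝 (0 : Fin n → ℂ), (jacz f z).det = 0)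
    (hS : segreFactor Q Q' f g ft 0 ≠ 0) :
    ∃ B : (Fin n → Fin n → ℂ) → (Fin n → ℂ) → ℂ,
      (∀ᶠ zs in 𝓝 0, AnalyticAt ℂ (B zs) 0 ∧
        ∀ᶠ χ in 𝓝 0, chiDet Q zs χ = B zs χ * (jacz ft χ).det) ∧
      ∃ᶠ zs in 𝓝 0, B zs 0 ≠ 0 := by
  set S := segreFactor Q Q' f g ft with hSdef
  set N : (Fin n → ℂ) × (Fin n → ℂ) → Fin n → ℂ := fun p k =>
    fderiv ℂ (unc Q') (segrePoint Q f ft p) (0, Pi.single k 1, 0) with hN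
  have hSa : AnalyticAt ℂ S 0 := analyticAt_segreFactor hQ hQ' h
  have hNa : ∀ k, AnalyticAt ℂ (fun p => N p k) 0 := fun k =>
    analyticAt_fderiv_apply hQ'.analyticAt (analyticAt_segrePoint hQ h) analyticAt_const
      (segrePoint_zero hQ h)
  have hS0 : ∀ᶠ zs in 𝓝 (0 : Fin n → Fin n → ℂ), ∀ᶠ χ in 𝓝 (0 : Fin n → ℂ),
      ∀ i, S (zs i, χ) ≠ 0 :=
    eventually_forall_slices (hSa.continuousAt.eventually_ne hS)
  refine ⟨fun zs χ => (∏ i, (S (zs i, χ))⁻¹) * (Matrix.of fun i k => N (zs i, χ) k).det, ?_, ?_⟩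
  · filter_upwards [hS0, eventually_forall_slices hSa.eventually_analyticAt,
      eventually_forall_slices (eventually_all.2 fun k => (hNa k).eventually_analyticAt),
      eventually_forall_slices (segreFactor_mul_chi hQ hQ' h)] with zs h0 h1 h2 h3
    have hslice : ∀ i, AnalyticAt ℂ (fun χ : Fin n → ℂ => (zs i, χ)) 0 := fun i =>
      analyticAt_const.prod analyticAt_id
    constructor
    · refine AnalyticAt.mul (Finset.analyticAt_fun_prod _ fun i _ => ?_)
        (analyticAt_det fun i k => ?_)
      · exact AnalyticAt.fun_inv (AnalyticAt.fun_comp (f := fun χ : Fin n → ℂ => (zs i, χ))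
          (h1.self_of_nhds i) (hslice i)) (h0.self_of_nhds i)
      · exact AnalyticAt.fun_comp (g := fun p => N p k) (f := fun χ : Fin n → ℂ => (zs i, χ))
          (h2.self_of_nhds i k) (hslice i)
    · filter_upwards [h0, h3] with χ h0 h3
      have hM : (Matrix.of fun i j => fderiv ℂ (unc Q) (zs i, χ, 0) (0, Pi.single j 1, 0)) =
          Matrix.diagonal (fun i => (S (zs i, χ))⁻¹) *
            ((Matrix.of fun i k => N (zs i, χ) k) * jacz ft χ) := by
        ext i j
        rw [Matrix.diagonal_mul, eq_inv_mul_iff_mul_eq₀ (h0 i), Matrix.of_apply, h3 i,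
          fderiv_chi_eq_dotProduct]
        simp [Matrix.mul_apply, dotProduct, hN]
      rw [chiDet, hM, Matrix.det_mul, Matrix.det_mul, Matrix.det_diagonal, mul_assoc]
  · have hfreq : ∃ᶠ zs in 𝓝 (0 : Fin n → Fin n → ℂ),
        (Matrix.of fun i => N (zs i, 0)).det ≠ 0 := by
      refine frequently_det_ne_zero (u := fun z => N (z, 0)) fun v hv => ?_
      refine hnd.comp hQ'.analyticAt h.analyticAt_f h.f_zero hφ ?_
      filter_upwards [hv, segrePoint_prod_zero hQ h] with z hz hz'
      rw [fderiv_chi_eq_dotProduct, ← hz']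
      exact hz
    refine (hfreq.and_eventually hS0).mono fun zs hzs => ?_
    exact mul_ne_zero (Finset.prod_ne_zero_iff.2 fun i _ => inv_ne_zero (hzs.2.self_of_nhds i))
      hzs.1

end Determinants

section Conjugation

variable {Q Q' : (Fin n → ℂ) → (Fin n → ℂ) → ℂ → ℂ} {f ft : (Fin n → ℂ) → ℂ → Fin n → ℂ}
  {g gt : (Fin n → ℂ) → ℂ → ℂ}

theorem tendsto_star_zero {V : Type*} [NormedAddCommGroup V] [StarAddMonoid V]
    [NormedStarGroup V] : Tendsto (star : V → V) (𝓝 0) (𝓝 0) :=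
  continuous_star.tendsto' _ _ (star_zero V)

theorem IsNormalDF.qBar (hQ : IsNormalDF Q) : IsNormalDF (QBar Q) := by
  have h1 : AnalyticAt ℂ (unc (QBar Q)) 0 := by
    have h0 := analyticAt_star_star hQ.analyticAt
    exact h0
  refine ⟨h1.eventually_analyticAt, ?_⟩
  filter_upwards [tendsto_star_zero.eventually hQ.2] with p hp
  obtain ⟨h2, h3⟩ := hp
  have hz : conjV (0 : Fin n → ℂ) = 0 := star_zero (Fin n → ℂ)
  constructor
  · simp only [QBar, hz]
    exact (congrArg star h2).trans (star_star _)
  · simp only [QBar, hz]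
    exact (congrArg star h3).trans (star_star _)

theorem IsRealNormalDF.qBar_apply (hQ : IsRealNormalDF Q) :
    ∀ᶠ p in 𝓝 (0 : (Fin n → ℂ) × (Fin n → ℂ) × ℂ),
      QBar Q p.2.1 p.1 (Q p.1 p.2.1 p.2.2) = p.2.2 := by
  have ht : Tendsto (fun p : (Fin n → ℂ) × (Fin n → ℂ) × ℂ =>
      (star p.2.1, star p.1, star p.2.2)) (𝓝 0) (𝓝 0) :=
    (by fun_prop : Continuous fun p : (Fin n → ℂ) × (Fin n → ℂ) × ℂ =>
      (star p.2.1, star p.1, star p.2.2)).tendsto' _ _ (by simp [← Prod.zero_eq_mk])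
  filter_upwards [ht.eventually hQ.2] with p hp
  have hc : ∀ v : Fin n → ℂ, conjV (star v) = v := star_star
  simp only [QBar, hc] at hp
  simp only [QBar]
  rw [show starRingEnd ℂ (star p.2.2) = p.2.2 from star_star _] at hp
  exact (congrArg star hp).trans (star_star _)

theorem IsHSPM.swap (hQ : IsRealNormalDF Q) (hQ' : IsRealNormalDF Q')
    (h : IsHSPM Q Q' f g ft gt) : IsHSPM (QBar Q) (QBar Q') ft gt f g := by
  refine ⟨h.2.2.1, h.2.2.2.1, h.1, h.2.1, h.ft_zero, h.gt_zero, h.f_zero, h.g_zero, ?_⟩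
  have hb : AnalyticAt ℂ (unc (QBar Q)) 0 := hQ.1.qBar.analyticAt
  have hb0 : QBar Q 0 0 0 = 0 := hQ.1.qBar.apply_zero
  have hτ : AnalyticAt ℂ (fun p : (Fin n → ℂ) × (Fin n → ℂ) × ℂ =>
      (p.1, unc (QBar Q) p)) 0 := analyticAt_fst.prod hb
  have hτ0 : ((0 : Fin n → ℂ), QBar Q 0 0 0) = 0 := by rw [hb0]; rfl
  have ht : Tendsto (fun p : (Fin n → ℂ) × (Fin n → ℂ) × ℂ =>
      (p.2.1, p.1, QBar Q p.1 p.2.1 p.2.2)) (𝓝 0) (𝓝 0) := by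
    have h1 : AnalyticAt ℂ (fun p : (Fin n → ℂ) × (Fin n → ℂ) × ℂ =>
        (p.2.1, p.1, QBar Q p.1 p.2.1 p.2.2)) 0 :=
      (analyticAt_fst.fun_comp analyticAt_snd).prod (analyticAt_fst.prod hb)
    simpa [ContinuousAt, hb0, ← Prod.zero_eq_mk] using h1.continuousAt
  have hsw : Tendsto (fun p : (Fin n → ℂ) × (Fin n → ℂ) × ℂ => (p.2.1, p.1, p.2.2))
      (𝓝 0) (𝓝 0) :=
    (by fun_prop : Continuous fun p : (Fin n → ℂ) × (Fin n → ℂ) × ℂ =>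
      (p.2.1, p.1, p.2.2)).tendsto' _ _ rfl
  have ht' : Tendsto (fun p : (Fin n → ℂ) × (Fin n → ℂ) × ℂ =>
      (f p.2.1 p.2.2, ft p.1 (QBar Q p.1 p.2.1 p.2.2), gt p.1 (QBar Q p.1 p.2.1 p.2.2)))
      (𝓝 0) (𝓝 0) := by
    have h1 : AnalyticAt ℂ (fun p : (Fin n → ℂ) × (Fin n → ℂ) × ℂ =>
        (f p.2.1 p.2.2, ft p.1 (QBar Q p.1 p.2.1 p.2.2), gt p.1 (QBar Q p.1 p.2.1 p.2.2))) 0 := by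
      refine AnalyticAt.prod ?_ (AnalyticAt.prod ?_ ?_)
      · exact AnalyticAt.fun_comp_of_eq (f := fun p : (Fin n → ℂ) × (Fin n → ℂ) × ℂ => p.2)
          h.analyticAt_f analyticAt_snd rfl
      · exact AnalyticAt.fun_comp_of_eq h.analyticAt_ft hτ hτ0
      · exact AnalyticAt.fun_comp_of_eq h.analyticAt_gt hτ hτ0
    simpa [ContinuousAt, hb0, h.f_zero, h.ft_zero, h.gt_zero, ← Prod.zero_eq_mk]
      using h1.continuousAt
  filter_upwards [hsw.eventually hQ.2, ht.eventually h.eventually_eq,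
    ht'.eventually hQ'.qBar_apply] with p h1 h2 h3
  simp only [h1] at h2
  rw [h2]
  exact h3.symm

theorem fderiv_qBar {P : (Fin n → ℂ) × (Fin n → ℂ) × ℂ} (hQ : DifferentiableAt ℂ (unc Q) P)
    (v : (Fin n → ℂ) × (Fin n → ℂ) × ℂ) :
    fderiv ℂ (unc (QBar Q)) (star P) (star v) = star (fderiv ℂ (unc Q) P v) := by
  have h1 : HasFDerivAt (unc (QBar Q)) _ (star P) := hQ.hasFDerivAt.star_star
  rw [h1.fderiv]
  simp

theorem ChiNondeg.qBar (hQ : AnalyticAt ℂ (unc Q) 0) (h : ChiNondeg Q) : ChiNondeg (QBar Q) := by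
  intro v hv
  rw [← star_eq_zero]
  apply h
  have ht : Tendsto (fun z : Fin n → ℂ => (z, (0 : Fin n → ℂ), (0 : ℂ))) (𝓝 0) (𝓝 0) :=
    (by fun_prop : Continuous fun z : Fin n → ℂ =>
      (z, (0 : Fin n → ℂ), (0 : ℂ))).tendsto' _ _ rfl
  filter_upwards [tendsto_star_zero.eventually hv, ht.eventually hQ.eventually_analyticAt]
    with z hz hQz
  have h1 := fderiv_qBar hQz.differentiableAt (0, star v, 0)
  rw [show star ((0 : Fin n → ℂ), star v, (0 : ℂ)) = (0, v, 0) by simp [Prod.star_def],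
    show star (z, (0 : Fin n → ℂ), (0 : ℂ)) = (star z, 0, 0) by simp [Prod.star_def], hz] at h1
  exact star_eq_zero.1 h1.symm

theorem chiDet_qBar (hQ : AnalyticAt ℂ (unc Q) 0) :
    ∀ᶠ zs in 𝓝 (0 : Fin n → Fin n → ℂ), ∀ᶠ χ in 𝓝 (0 : Fin n → ℂ),
      chiDet (QBar Q) (star zs) (star χ) = star (chiDet Q zs χ) := by
  have ht : Tendsto (fun p : (Fin n → ℂ) × (Fin n → ℂ) => (p.1, p.2, (0 : ℂ))) (𝓝 0) (𝓝 0) :=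
    (by fun_prop : Continuous fun p : (Fin n → ℂ) × (Fin n → ℂ) =>
      (p.1, p.2, (0 : ℂ))).tendsto' _ _ rfl
  filter_upwards [eventually_forall_slices (ht.eventually hQ.eventually_analyticAt)] with zs hzs
  filter_upwards [hzs] with χ hχ
  change _ = starRingEnd ℂ (chiDet Q zs χ)
  rw [chiDet, chiDet, RingHom.map_det]
  congr 1
  ext i j
  simp only [Matrix.of_apply, RingHom.mapMatrix_apply, Matrix.map_apply, starRingEnd_apply]
  rw [← fderiv_qBar (hχ i).differentiableAt]
  have h1 : star (Pi.single j 1 : Fin n → ℂ) = Pi.single j 1 := by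
    ext k
    simp [Pi.single_apply, apply_ite]
  rw [show star ((0 : Fin n → ℂ), (Pi.single j 1 : Fin n → ℂ), (0 : ℂ)) = (0, Pi.single j 1, 0) by
    simp [Prod.star_def, h1]]
  congr 2
  simp [Prod.star_def]

end Conjugation

/-- Theorem 1.5: if `M'` is finitely nondegenerate at `0` and `ℋ` is totally
Segre nondegenerate at `0`, then the orders of vanishing of `det f_z(·,0)` and `det f̃_χ(·,0)`
agree, and their lowest order homogeneous Taylor terms agree up to conjugation and a nonzero
constant factor. -/
theorem statement4 (n : ℕ) (hn : 1 ≤ n)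
    (Q Q' : (Fin n → ℂ) → (Fin n → ℂ) → ℂ → ℂ)
    (hQ : IsRealNormalDF Q) (hQ' : IsRealNormalDF Q')
    (hM' : FinNondeg Q')
    (f ft : (Fin n → ℂ) → ℂ → Fin n → ℂ) (g gt : (Fin n → ℂ) → ℂ → ℂ)
    (hH : IsHSPM Q Q' f g ft gt)
    (hnd : TotallySegreNondeg f ft) :
    vanishOrder (fun z => (jacz f z).det) = vanishOrder (fun χ => (jacz ft χ).det) ∧
    ∃ c : ℂ, c ≠ 0 ∧ ∀ z : Fin n → ℂ,
      homogTerm (vanishOrder (fun z' => (jacz f z').det)) (fun z' => (jacz f z').det) z =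
        c * starRingEnd ℂ
          (homogTerm (vanishOrder (fun χ => (jacz ft χ).det)) (fun χ => (jacz ft χ).det)
            (conjV z)) := by
  obtain ⟨hφ0, hψ0⟩ := hnd
  have hN := hQ.1
  have hN' := hQ'.1
  have hχ := ChiNondeg.of_finNondeg hN'.analyticAt hM'
  have hH2 := hH.swap hQ hQ'
  have hχ2 := hχ.qBar hN'.analyticAt
  have hg := gt_tau_not_eventually_zero hn hN.qBar hN'.qBar hH2 hχ2 hψ0 hφ0
  have hgt := gt_tau_not_eventually_zero hn hN hN' hH hχ hφ0 hψ0
  obtain ⟨B, hB, hB0⟩ := exists_chiDet_eq_mul hN hN' hH hχ hφ0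
    (segreFactor_zero_ne_zero hn hN hN' hH hχ hφ0 hψ0 hg)
  obtain ⟨C, hC, hC0⟩ := exists_chiDet_eq_mul hN.qBar hN'.qBar hH2 hχ2 hψ0
    (segreFactor_zero_ne_zero hn hN.qBar hN'.qBar hH2 hχ2 hψ0 hφ0 hgt)
  have hφ := analyticAt_det_jacz hH.analyticAt_f
  have hψ := analyticAt_det_jacz hH.analyticAt_ft
  set φ : (Fin n → ℂ) → ℂ := fun z => (jacz f z).det with hφdef
  set ψ : (Fin n → ℂ) → ℂ := fun χ => (jacz ft χ).det with hψdef
  set φb : (Fin n → ℂ) → ℂ := fun v => star (φ (star v)) with hφbdef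
  have hφb : AnalyticAt ℂ φb 0 := analyticAt_star_star hφ
  have hφb0 : ¬ ∀ᶠ z in 𝓝 (0 : Fin n → ℂ), φb z = 0 := fun h0 => hφ0 (by
    filter_upwards [tendsto_star_zero.eventually h0] with z hz
    simpa [hφbdef] using hz)
  have hrel : ∀ᶠ zs in 𝓝 (0 : Fin n → Fin n → ℂ), AnalyticAt ℂ (B zs) 0 ∧
      AnalyticAt ℂ (fun χ => star (C (star zs) (star χ))) 0 ∧
      ∀ᶠ χ in 𝓝 0, B zs χ * ψ χ = star (C (star zs) (star χ)) * φb χ := by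
    filter_upwards [hB, tendsto_star_zero.eventually hC, chiDet_qBar hN.analyticAt]
      with zs h1 h2 h3
    refine ⟨h1.1, analyticAt_star_star h2.1, ?_⟩
    filter_upwards [h1.2, tendsto_star_zero.eventually h2.2, h3] with χ h4 h5 h6
    rw [← h4, ← star_star (chiDet Q zs χ), ← h6, h5, star_mul']
  have hC0' : ∃ᶠ zs in 𝓝 (0 : Fin n → Fin n → ℂ), star (C (star zs) (star 0)) ≠ 0 := by
    intro h0
    refine hC0 ?_
    filter_upwards [tendsto_star_zero.eventually h0] with zs hzs
    simpa using hzs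
  obtain ⟨zs, hB1, hBa, hCa, hBC⟩ := (hB0.and_eventually hrel).exists
  obtain ⟨ws, hC1, hBa', hCa', hBC'⟩ := (hC0'.and_eventually hrel).exists
  have hord : vanishOrder φb = vanishOrder ψ := by
    refine le_antisymm (vanishOrder_le_of_mul_eq hBa hCa hφb hψ hBC hB1 hψ0)
      (vanishOrder_le_of_mul_eq hCa' hBa' hψ hφb ?_ hC1 hφb0)
    filter_upwards [hBC'] with χ h using h.symm
  have hord' : vanishOrder φ = vanishOrder ψ := by
    rw [← hord]
    exact (vanishOrder_star_star hφ).symm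
  refine ⟨hord', ?_⟩
  have hterm : ∀ χ, B zs 0 * homogTerm (vanishOrder ψ) ψ χ =
      star (C (star zs) (star 0)) * star (homogTerm (vanishOrder ψ) φ (star χ)) := by
    intro χ
    rw [← homogTerm_mul hBa hψ le_rfl, homogTerm_congr hBC,
      homogTerm_mul hCa hφb hord.ge, ← homogTerm_star_star hφ]
  have hCne : C (star zs) 0 ≠ 0 := by
    intro h0
    refine homogTerm_vanishOrder_ne_zero hψ hψ0 (funext fun χ => ?_)
    have := hterm χ
    simp only [star_zero, h0, zero_mul] at this
    exact (mul_eq_zero.1 this).resolve_left hB1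
  refine ⟨star (B zs 0) / C (star zs) 0, div_ne_zero (star_ne_zero.2 hB1) hCne, fun z => ?_⟩
  have h1 := congrArg star (hterm (star z))
  simp only [star_mul', star_star, star_zero] at h1
  rw [hord', div_mul_eq_mul_div, eq_div_iff hCne, mul_comm]
  exact h1.symm

end HSPMpaper
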